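/- Let Y be a squared-Bessel process of dimension δ ∈ (0,2) started at 1, let τ_0 = inf{t : Y_t = 0}, and let α ≥ 0. There exists a constant c_{α,δ} ∈ (0,∞) such that P_1(∫_0^{τ_0} Y_s^α ds ≥ z) ≥ c_{α,δ} z^{-(2-δ)/(2+2α)} for all z > 1. -/

import Mathlib

open MeasureTheory Filter Set

/-- `Y` is a squared-Bessel process of dimension `δ` started at `y`, characterized via the
martingale problem: `Y_t - y - δ t` is a martingale with quadratic variation `4∫_0^t Y_s ds`. -/
structure IsBESQ {Ω : Type*} {m : MeasurableSpace Ω} (μ : Measure Ω)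
    (ℱ : Filtration ℝ m) (δ y : ℝ) (Y : ℝ → Ω → ℝ) : Prop where
  nonneg : ∀ t ω, 0 ≤ Y t ω
  cont : ∀ ω, Continuous fun t => Y t ω
  init : ∀ ω, Y 0 ω = y
  adapted : Adapted ℱ Y
  integrable_sq : ∀ t : ℝ, Integrable (fun ω => (Y t ω) ^ 2) μ
  mart : ∀ s t : ℝ, 0 ≤ s → s ≤ t →
    (μ[(fun ω => Y t ω - y - δ * t) | ℱ s]) =ᵐ[μ] fun ω => Y s ω - y - δ * s
  qv : ∀ s t : ℝ, 0 ≤ s → s ≤ t →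
    (μ[(fun ω => (Y t ω - y - δ * t) ^ 2 - 4 * ∫ u in (0:ℝ)..t, Y u ω) | ℱ s])
      =ᵐ[μ] fun ω => (Y s ω - y - δ * s) ^ 2 - 4 * ∫ u in (0:ℝ)..s, Y u ω

/-!
The martingale problem alone gives Dynkin's formula at bounded optional times up to which the path
stays in a compact interval: expand a test function to second order along a grid of mesh `h`, use
the conditional first and second moments of the increments, and let `h → 0`.

Three test functions suffice. As `x ^ (1 - δ / 2)` is harmonic, the path started at `1` reaches
height `K` before hitting `0` with probability about `K ^ (-(1 - δ / 2))`. The test function `x`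
shows that the exit time from `[ε, K]` has finite mean, and `(x - K) ^ 2` that from height `K` the
path stays above `K / 2` for a time of order `K` with probability at least `1 / 2`. Such a path has
`∫ Y ^ α ≥ c * K ^ (1 + α)`, so `K` is taken of order `z ^ (1 / (1 + α))`.
-/

open scoped Topology

namespace IsBESQ

variable {Ω : Type*} {m : MeasurableSpace Ω} {μ : Measure Ω} [IsProbabilityMeasure μ]
  {ℱ : Filtration ℝ m} {δ y : ℝ} {Y : ℝ → Ω → ℝ}

lemma measurable {μ : Measure Ω} (hY : IsBESQ μ ℱ δ y Y) (t : ℝ) : Measurable (Y t) :=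
  (hY.adapted t).mono (ℱ.le t) le_rfl

lemma memLp_two {μ : Measure Ω} (hY : IsBESQ μ ℱ δ y Y) (t : ℝ) : MemLp (Y t) 2 μ :=
  (memLp_two_iff_integrable_sq (hY.measurable t).aestronglyMeasurable).2 (hY.integrable_sq t)

lemma integrable (hY : IsBESQ μ ℱ δ y Y) (t : ℝ) : Integrable (Y t) μ :=
  (hY.memLp_two t).integrable one_le_two

lemma setIntegral_eq (hY : IsBESQ μ ℱ δ y Y) {s t : ℝ} (hs : 0 ≤ s) (hst : s ≤ t) {A : Set Ω}
    (hA : MeasurableSet[ℱ s] A) :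
    ∫ ω in A, Y t ω ∂μ = ∫ ω in A, Y s ω ∂μ + δ * (t - s) * μ.real A := by
  have centred (r : ℝ) : ∫ ω in A, (Y r ω - y - δ * r) ∂μ
      = ∫ ω in A, Y r ω ∂μ - (y + δ * r) * μ.real A := by
    simp_rw [sub_sub]
    rw [integral_sub (hY.integrable r).integrableOn (integrable_const _), setIntegral_const,
      smul_eq_mul, mul_comm]
  have hint : Integrable (fun ω => Y t ω - y - δ * t) μ :=
    ((hY.integrable t).sub (integrable_const _)).sub (integrable_const _)
  have key := setIntegral_condExp (ℱ.le s) hint hA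
  rw [setIntegral_congr_ae (ℱ.le s A hA) ((hY.mart s t hs hst).mono fun _ h _ => h),
    centred, centred] at key
  linarith

lemma integral_eq (hY : IsBESQ μ ℱ δ y Y) {t : ℝ} (ht : 0 ≤ t) : ∫ ω, Y t ω ∂μ = y + δ * t := by
  simpa [hY.init] using hY.setIntegral_eq le_rfl ht MeasurableSet.univ

lemma integrable_uncurry (hY : IsBESQ μ ℱ δ y Y) {s : ℝ} (hs : 0 ≤ s) (t : ℝ) :
    Integrable (Function.uncurry Y) ((volume.restrict (Ioc s t)).prod μ) := by
  rw [integrable_prod_iff (measurable_uncurry_of_continuous_of_measurable hY.cont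
    hY.measurable).aestronglyMeasurable]
  refine ⟨Eventually.of_forall hY.integrable, ?_⟩
  have hcont : Continuous fun u => y + δ * u := by fun_prop
  refine (hcont.integrableOn_Icc.mono_set (Ioc_subset_Icc_self (a := s) (b := t))).congr ?_
  filter_upwards [ae_restrict_mem measurableSet_Ioc] with u hu
  simp_rw [← hY.integral_eq (hs.trans hu.1.le), Function.uncurry_apply_pair,
    Real.norm_of_nonneg (hY.nonneg u _)]

lemma integrable_intervalIntegral (hY : IsBESQ μ ℱ δ y Y) {s t : ℝ} (hs : 0 ≤ s) (hst : s ≤ t) :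
    Integrable (fun ω => ∫ u in s..t, Y u ω) μ := by
  simpa [intervalIntegral.integral_of_le hst] using (hY.integrable_uncurry hs t).integral_prod_right

lemma setIntegral_intervalIntegral (hY : IsBESQ μ ℱ δ y Y) {s t : ℝ} (hs : 0 ≤ s) (hst : s ≤ t)
    {A : Set Ω} (hA : MeasurableSet[ℱ s] A) :
    ∫ ω in A, (∫ u in s..t, Y u ω) ∂μ
      = (t - s) * ∫ ω in A, Y s ω ∂μ + δ * (t - s) ^ 2 / 2 * μ.real A := by
  have hint : Integrable (Function.uncurry Y) ((volume.restrict (Ioc s t)).prod (μ.restrict A)) :=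
    (hY.integrable_uncurry hs t).mono_measure (Measure.prod_mono le_rfl Measure.restrict_le_self)
  simp_rw [intervalIntegral.integral_of_le hst]
  rw [← integral_integral_swap hint, ← intervalIntegral.integral_of_le hst,
    intervalIntegral.integral_congr fun u hu =>
      hY.setIntegral_eq hs (uIcc_of_le hst ▸ hu : u ∈ Icc s t).1 hA,
    intervalIntegral.integral_comp_sub_right
      (fun v => ∫ ω in A, Y s ω ∂μ + δ * v * μ.real A) s]
  rw [sub_self, intervalIntegral.integral_add intervalIntegrable_const
      ((by fun_prop : Continuous fun v => δ * v * μ.real A).intervalIntegrable _ _),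
    intervalIntegral.integral_const, intervalIntegral.integral_mul_const,
    intervalIntegral.integral_const_mul, integral_id, smul_eq_mul]
  ring

lemma setIntegral_sq (hY : IsBESQ μ ℱ δ y Y) {s t : ℝ} (hs : 0 ≤ s) (hst : s ≤ t) {A : Set Ω}
    (hA : MeasurableSet[ℱ s] A) :
    ∫ ω in A, Y t ω ^ 2 ∂μ = ∫ ω in A, Y s ω ^ 2 ∂μ
      + (2 * δ + 4) * (t - s) * ∫ ω in A, Y s ω ∂μ
      + (2 * δ + δ ^ 2) * (t - s) ^ 2 * μ.real A := by
  have sq_int (r : ℝ) : Integrable (fun ω => (Y r ω - y - δ * r) ^ 2) μ := by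
    refine ((((hY.integrable_sq r).sub ((hY.integrable r).const_mul (2 * (y + δ * r)))).add
      (integrable_const ((y + δ * r) ^ 2)))).congr (Eventually.of_forall fun ω => ?_)
    simp only [Pi.add_apply, Pi.sub_apply]
    ring
  have expand (r : ℝ) (hr : 0 ≤ r) :
      ∫ ω in A, ((Y r ω - y - δ * r) ^ 2 - 4 * ∫ u in (0:ℝ)..r, Y u ω) ∂μ
        = ∫ ω in A, Y r ω ^ 2 ∂μ - 2 * (y + δ * r) * ∫ ω in A, Y r ω ∂μ
          + (y + δ * r) ^ 2 * μ.real A - 4 * ∫ ω in A, (∫ u in (0:ℝ)..r, Y u ω) ∂μ := by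
    have h2 : IntegrableOn (fun ω => Y r ω ^ 2) A μ := (hY.integrable_sq r).integrableOn
    have h1 : IntegrableOn (fun ω => 2 * (y + δ * r) * Y r ω) A μ :=
      ((hY.integrable r).const_mul _).integrableOn
    have h21 : IntegrableOn (fun ω => Y r ω ^ 2 - 2 * (y + δ * r) * Y r ω) A μ := h2.sub h1
    rw [integral_sub (sq_int r).integrableOn
      ((hY.integrable_intervalIntegral le_rfl hr).const_mul 4).integrableOn, integral_const_mul,
      show (fun ω => (Y r ω - y - δ * r) ^ 2)
        = fun ω => Y r ω ^ 2 - 2 * (y + δ * r) * Y r ω + (y + δ * r) ^ 2 by ext; ring,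
      integral_add h21 (integrable_const _), integral_sub h2 h1, integral_const_mul,
      setIntegral_const, smul_eq_mul, mul_comm (μ.real A)]
  have split : ∫ ω in A, (∫ u in (0:ℝ)..t, Y u ω) ∂μ
      = ∫ ω in A, (∫ u in (0:ℝ)..s, Y u ω) ∂μ + ∫ ω in A, (∫ u in s..t, Y u ω) ∂μ := by
    rw [← integral_add (hY.integrable_intervalIntegral le_rfl hs).integrableOn
      (hY.integrable_intervalIntegral hs hst).integrableOn]
    simp_rw [intervalIntegral.integral_add_adjacent_intervals
      ((hY.cont _).intervalIntegrable _ _) ((hY.cont _).intervalIntegrable _ _)]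
  have hint : Integrable (fun ω => (Y t ω - y - δ * t) ^ 2 - 4 * ∫ u in (0:ℝ)..t, Y u ω) μ :=
    (sq_int t).sub ((hY.integrable_intervalIntegral le_rfl (hs.trans hst)).const_mul 4)
  have key := setIntegral_condExp (ℱ.le s) hint hA
  rw [setIntegral_congr_ae (ℱ.le s A hA) ((hY.qv s t hs hst).mono fun _ h _ => h)] at key
  rw [expand s hs, expand t (hs.trans hst), split, hY.setIntegral_intervalIntegral hs hst hA,
    hY.setIntegral_eq hs hst hA] at key
  linear_combination -key

lemma condExp_sub (hY : IsBESQ μ ℱ δ y Y) {s t : ℝ} (hs : 0 ≤ s) (hst : s ≤ t) :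
    μ[Y t - Y s | ℱ s] =ᵐ[μ] fun _ => δ * (t - s) := by
  refine (ae_eq_condExp_of_forall_setIntegral_eq (ℱ.le s) ((hY.integrable t).sub (hY.integrable s))
    (fun _ _ _ => integrable_const _) (fun A hA _ => ?_) aestronglyMeasurable_const).symm
  simp only [Pi.sub_apply]
  rw [integral_sub (hY.integrable t).integrableOn (hY.integrable s).integrableOn,
    hY.setIntegral_eq hs hst hA, setIntegral_const, smul_eq_mul]
  ring

lemma condExp_sq_sub_sq (hY : IsBESQ μ ℱ δ y Y) {s t : ℝ} (hs : 0 ≤ s) (hst : s ≤ t) :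
    μ[Y t ^ 2 - Y s ^ 2 | ℱ s] =ᵐ[μ]
      fun ω => (2 * δ + 4) * (t - s) * Y s ω + (2 * δ + δ ^ 2) * (t - s) ^ 2 := by
  have hlin : Integrable (fun ω => (2 * δ + 4) * (t - s) * Y s ω) μ := (hY.integrable s).const_mul _
  refine (ae_eq_condExp_of_forall_setIntegral_eq (ℱ.le s)
    ((hY.integrable_sq t).sub (hY.integrable_sq s))
    (fun _ _ _ => (hlin.add (integrable_const _)).integrableOn) (fun A hA _ => ?_)
    (((hY.adapted s).const_mul _).add_const _).aestronglyMeasurable).symm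
  simp only [Pi.add_apply, Pi.sub_apply]
  rw [integral_add hlin.integrableOn (integrable_const _), integral_const_mul, setIntegral_const,
    integral_sub (hY.integrable_sq t).integrableOn (hY.integrable_sq s).integrableOn,
    hY.setIntegral_sq hs hst hA, smul_eq_mul]
  ring

lemma condExp_sub_sq (hY : IsBESQ μ ℱ δ y Y) {s t : ℝ} (hs : 0 ≤ s) (hst : s ≤ t) :
    μ[(Y t - Y s) ^ 2 | ℱ s] =ᵐ[μ]
      fun ω => 4 * (t - s) * Y s ω + (2 * δ + δ ^ 2) * (t - s) ^ 2 := by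
  have hsub : Integrable (Y t - Y s) μ := (hY.integrable t).sub (hY.integrable s)
  have hprod : Integrable ((-2 • Y s) * (Y t - Y s)) μ :=
    ((hY.memLp_two s).const_smul (-2 : ℤ)).integrable_mul ((hY.memLp_two t).sub (hY.memLp_two s))
  rw [show (Y t - Y s) ^ 2 = (Y t ^ 2 - Y s ^ 2) + (-2 • Y s) * (Y t - Y s) by
    simp only [zsmul_eq_mul]; push_cast; ring]
  filter_upwards [condExp_add ((hY.integrable_sq t).sub (hY.integrable_sq s)) hprod (ℱ s),
    condExp_mul_of_stronglyMeasurable_left ((hY.adapted s).stronglyMeasurable.const_smul (-2 : ℤ))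
      hprod hsub, hY.condExp_sq_sub_sq hs hst, hY.condExp_sub hs hst] with ω hadd hmul hsq hlin
  refine hadd.trans ?_
  rw [Pi.add_apply, hmul, Pi.mul_apply, hlin]
  refine (congrArg (· + _) hsq).trans ?_
  simp only [Pi.smul_apply, zsmul_eq_mul]
  push_cast
  ring

end IsBESQ

section SecondMoments

variable {Ω : Type*} {m₀ m : MeasurableSpace Ω} {μ : Measure Ω} [IsProbabilityMeasure μ]

lemma integral_mul_eq_integral_mul_condExp (hm : m₀ ≤ m) {w f : Ω → ℝ}
    (hw : StronglyMeasurable[m₀] w) {C : ℝ} (hC : ∀ ω, |w ω| ≤ C) (hf : Integrable f μ) :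
    ∫ ω, w ω * f ω ∂μ = ∫ ω, w ω * μ[f | m₀] ω ∂μ :=
  (integral_condExp (f := w * f) hm).symm.trans <|
    integral_congr_ae (condExp_stronglyMeasurable_mul_of_bound hm hw hf C (ae_of_all _ hC))

lemma integral_mul_le_of_condExp_le (hm : m₀ ≤ m) {w f : Ω → ℝ}
    (hw : StronglyMeasurable[m₀] w) (hw0 : ∀ ω, 0 ≤ w ω) {C : ℝ} (hC : ∀ ω, w ω ≤ C)
    (hf : Integrable f μ) {c : ℝ} (hc : μ[f | m₀] ≤ᵐ[μ] fun _ => c) :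
    ∫ ω, w ω * f ω ∂μ ≤ (∫ ω, w ω ∂μ) * c := by
  have hC' (ω : Ω) : |w ω| ≤ C := (abs_of_nonneg (hw0 ω)).trans_le (hC ω)
  have hwm : AEStronglyMeasurable w μ := (hw.mono hm).aestronglyMeasurable
  rw [integral_mul_eq_integral_mul_condExp hm hw hC' hf, ← integral_mul_const]
  exact integral_mono_ae (integrable_condExp.bdd_mul hwm (ae_of_all _ hC'))
    ((Integrable.of_bound hwm C (ae_of_all _ hC')).mul_const c)
    (hc.mono fun ω h => mul_le_mul_of_nonneg_left h (hw0 ω))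

lemma integral_add_sq_le (hm : m₀ ≤ m) {S q : Ω → ℝ}
    (hS : StronglyMeasurable[m₀] S) (hS0 : ∀ ω, 0 ≤ S ω) {C : ℝ} (hSC : ∀ ω, S ω ≤ C)
    (hq : Measurable q) (hq0 : ∀ ω, 0 ≤ q ω) {b : ℝ} (hqb : ∀ ω, q ω ≤ b) {c : ℝ}
    (hqc : μ[q | m₀] ≤ᵐ[μ] fun _ => c) :
    ∫ ω, (S ω + q ω) ^ 2 ∂μ ≤ ∫ ω, S ω ^ 2 ∂μ + 2 * ((∫ ω, S ω ∂μ) * c) + b * c := by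
  have S_memLp : MemLp S 2 μ := .of_bound (hS.mono hm).aestronglyMeasurable C <|
    ae_of_all _ fun ω => (Real.norm_of_nonneg (hS0 ω)).trans_le (hSC ω)
  have q_memLp : MemLp q 2 μ := .of_bound hq.aestronglyMeasurable b <|
    ae_of_all _ fun ω => (Real.norm_of_nonneg (hq0 ω)).trans_le (hqb ω)
  have q_int : Integrable q μ := q_memLp.integrable one_le_two
  have hSq : Integrable (fun ω => 2 * (S ω * q ω)) μ := (S_memLp.integrable_mul q_memLp).const_mul 2
  have hSSq : Integrable (fun ω => S ω ^ 2 + 2 * (S ω * q ω)) μ := S_memLp.integrable_sq.add hSq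
  have cross := integral_mul_le_of_condExp_le hm hS hS0 hSC q_int hqc
  have q_mean : ∫ ω, b * q ω ∂μ ≤ b * c := by
    simpa using integral_mul_le_of_condExp_le (μ := μ) hm stronglyMeasurable_const
      (fun ω => (hq0 ω).trans (hqb ω)) (fun _ => le_rfl) q_int hqc
  have q_sq : ∫ ω, q ω ^ 2 ∂μ ≤ ∫ ω, b * q ω ∂μ :=
    integral_mono q_memLp.integrable_sq (q_int.const_mul b) fun ω => by
      simpa only [sq] using mul_le_mul_of_nonneg_right (hqb ω) (hq0 ω)
  calc ∫ ω, (S ω + q ω) ^ 2 ∂μ = ∫ ω, (S ω ^ 2 + 2 * (S ω * q ω) + q ω ^ 2) ∂μ := by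
        congr with ω; ring
    _ = ∫ ω, S ω ^ 2 ∂μ + 2 * ∫ ω, S ω * q ω ∂μ + ∫ ω, q ω ^ 2 ∂μ := by
        rw [integral_add hSSq q_memLp.integrable_sq, integral_add S_memLp.integrable_sq hSq,
          integral_const_mul]
    _ ≤ _ := by linarith

lemma integral_sum_sq_le {𝒢 : Filtration ℕ m} {q : ℕ → Ω → ℝ} {b c : ℝ} (hc : 0 ≤ c)
    (hq : ∀ i, StronglyMeasurable[𝒢 (i + 1)] (q i)) (hq0 : ∀ i ω, 0 ≤ q i ω)
    (hqb : ∀ i ω, q i ω ≤ b) (hqc : ∀ i, μ[q i | 𝒢 i] ≤ᵐ[μ] fun _ => c) (n : ℕ) :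
    ∫ ω, (∑ i ∈ Finset.range n, q i ω) ^ 2 ∂μ ≤ n * c * (n * c + b) := by
  have q_int (i : ℕ) : Integrable (q i) μ :=
    .of_bound ((hq i).mono (𝒢.le _)).aestronglyMeasurable b <| ae_of_all _ fun ω =>
      (Real.norm_of_nonneg (hq0 i ω)).trans_le (hqb i ω)
  have q_mean (i : ℕ) : ∫ ω, q i ω ∂μ ≤ c := by
    simpa using integral_mul_le_of_condExp_le (𝒢.le i) stronglyMeasurable_one
      (fun _ => zero_le_one) (fun _ => le_rfl) (q_int i) (hqc i)
  induction n with
  | zero => simp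
  | succ n ih =>
    have mean : ∫ ω, ∑ i ∈ Finset.range n, q i ω ∂μ ≤ n * c := by
      rw [integral_finsetSum _ fun i _ => q_int i]
      simpa using Finset.sum_le_card_nsmul (Finset.range n) _ c fun i _ => q_mean i
    have step := integral_add_sq_le (𝒢.le n) (C := n * b)
      (Finset.stronglyMeasurable_fun_sum (Finset.range n) fun i hi =>
        (hq i).mono (𝒢.mono (Finset.mem_range.1 hi)))
      (fun ω => Finset.sum_nonneg fun i _ => hq0 i ω)
      (fun ω => by
        simpa using Finset.sum_le_card_nsmul (Finset.range n) (q · ω) b fun i _ => hqb i ω)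
      ((hq n).mono (𝒢.le _)).measurable (hq0 n) (hqb n) (hqc n)
    simp only [Finset.sum_range_succ]
    push_cast
    nlinarith [mul_le_mul_of_nonneg_right mean hc, sq_nonneg c]

lemma tendsto_integral_mul_zero {ι : Type*} {l : Filter ι} [l.IsCountablyGenerated]
    {M Q : ι → Ω → ℝ} {B : ℝ} (hM : ∀ i, Measurable (M i)) (hM0 : ∀ i ω, 0 ≤ M i ω)
    (hM1 : ∀ i ω, M i ω ≤ 1) (hMlim : ∀ ω, Tendsto (M · ω) l (𝓝 0))
    (hQ : ∀ᶠ i in l, MemLp (Q i) 2 μ) (hQ0 : ∀ i ω, 0 ≤ Q i ω)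
    (hQB : ∀ᶠ i in l, ∫ ω, Q i ω ^ 2 ∂μ ≤ B) :
    Tendsto (fun i => ∫ ω, M i ω * Q i ω ∂μ) l (𝓝 0) := by
  have hM2 : Tendsto (fun i => ∫ ω, M i ω ^ 2 ∂μ) l (𝓝 0) := by
    simpa using tendsto_integral_filter_of_dominated_convergence (fun _ => (1 : ℝ))
      (.of_forall fun i => ((hM i).pow_const 2).aestronglyMeasurable)
      (.of_forall fun i => ae_of_all _ fun ω => by
        rw [Real.norm_of_nonneg (sq_nonneg _)]; exact pow_le_one₀ (hM0 i ω) (hM1 i ω))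
      (integrable_const _) (ae_of_all μ fun ω => (hMlim ω).pow 2)
  have cauchy_schwarz (i : ι) (hi : MemLp (Q i) 2 μ) : ∫ ω, M i ω * Q i ω ∂μ
      ≤ (∫ ω, M i ω ^ 2 ∂μ) ^ (1 / 2 : ℝ) * (∫ ω, Q i ω ^ 2 ∂μ) ^ (1 / 2 : ℝ) := by
    simpa using integral_mul_le_Lp_mul_Lq_of_nonneg .two_two (ae_of_all μ (hM0 i))
      (ae_of_all μ (hQ0 i))
      (by simpa using MemLp.of_bound (hM i).aestronglyMeasurable 1 (ae_of_all μ fun ω =>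
        (Real.norm_of_nonneg (hM0 i ω)).trans_le (hM1 i ω))) (by simpa using hi)
  have bound : Tendsto (fun i => (∫ ω, M i ω ^ 2 ∂μ) ^ (1 / 2 : ℝ) * B ^ (1 / 2 : ℝ)) l (𝓝 0) := by
    simpa using (hM2.rpow_const (.inr (by norm_num : (0 : ℝ) ≤ 1 / 2))).mul_const (B ^ (1 / 2 : ℝ))
  refine squeeze_zero' (.of_forall fun i => integral_nonneg fun ω => mul_nonneg (hM0 i ω) (hQ0 i ω))
    ((hQ.and hQB).mono fun i hi => (cauchy_schwarz i hi.1).trans ?_) bound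
  gcongr
  exact hi.2

end SecondMoments

section Grid

/-- The number of points of the grid `{0, h, 2h, …}` in `[0, t]`, so that `gridCount h t * h` is the
first grid point after `t`. -/
noncomputable def gridCount (h t : ℝ) : ℕ := ⌊t / h⌋₊ + 1

variable {h t : ℝ} {i : ℕ}

lemma lt_gridCount_iff (hh : 0 < h) (ht : 0 ≤ t) : i < gridCount h t ↔ i * h ≤ t := by
  rw [gridCount, Nat.lt_add_one_iff, Nat.le_floor_iff (by positivity), le_div_iff₀ hh]

lemma lt_gridCount_mul (hh : 0 < h) : t < gridCount h t * h := by
  rw [← div_lt_iff₀ hh, gridCount]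
  exact_mod_cast Nat.lt_floor_add_one (t / h)

lemma floor_div_mul_mem_Icc (ht : 0 ≤ t) : (⌊t / h⌋₊ : ℝ) * h ∈ Icc 0 t := by
  rcases le_or_gt h 0 with hh | hh
  · simp [Nat.floor_of_nonpos (div_nonpos_of_nonneg_of_nonpos ht hh), ht]
  · exact ⟨by positivity, (le_div_iff₀ hh).1 (Nat.floor_le (by positivity))⟩

lemma gridCount_mul_le (ht : 0 ≤ t) : gridCount h t * h ≤ t + h := by
  rw [gridCount]
  push_cast
  linarith [(floor_div_mul_mem_Icc (h := h) ht).2]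

lemma gridCount_mono (hh : 0 < h) : Monotone (gridCount h) := fun _ _ hst =>
  Nat.add_le_add_right (Nat.floor_mono (div_le_div_of_nonneg_right hst hh.le)) 1

lemma measurable_gridCount (h : ℝ) : Measurable (gridCount h) :=
  (Nat.measurable_floor.comp (measurable_id.div_const h)).add_const 1

lemma tendsto_gridCount_mul (ht : 0 ≤ t) :
    Tendsto (fun h => gridCount h t * h) (𝓝[>] 0) (𝓝 t) := by
  have upper : Tendsto (fun h => t + h) (𝓝[>] 0) (𝓝 t) := by
    simpa using ((by fun_prop : Continuous fun h => t + h).tendsto 0).mono_left nhdsWithin_le_nhds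
  refine tendsto_of_tendsto_of_tendsto_of_le_of_le' tendsto_const_nhds upper ?_ ?_ <;>
    filter_upwards [self_mem_nhdsWithin] with h hh
  exacts [(lt_gridCount_mul hh).le, gridCount_mul_le ht]

variable {φ : ℝ → ℝ}

lemma eventually_forall_abs_sub_le (hφ : Continuous φ) (t : ℝ) {η : ℝ} (hη : 0 < η) :
    ∀ᶠ h in 𝓝[>] 0, ∀ u ∈ Icc 0 t, ∀ v ∈ Icc 0 t, |u - v| ≤ h → |φ u - φ v| ≤ η := by
  obtain ⟨r, hr, hunif⟩ := Metric.uniformContinuousOn_iff.1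
    (isCompact_Icc.uniformContinuousOn_of_continuous (s := Icc 0 t) hφ.continuousOn) η hη
  filter_upwards [Ioo_mem_nhdsGT hr] with h hh u hu v hv huv
  exact (hunif u hu v hv (huv.trans_lt hh.2)).le

lemma abs_sum_sub_integral_le (hφ : Continuous φ) (hh : 0 ≤ h) {η : ℝ} (k : ℕ)
    (hosc : ∀ i < k, ∀ u ∈ Icc (i * h) ((i + 1) * h), |φ (i * h) - φ u| ≤ η) :
    |∑ i ∈ Finset.range k, h * φ (i * h) - ∫ u in (0 : ℝ)..k * h, φ u| ≤ k * h * η := by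
  have hint (a b : ℝ) : IntervalIntegrable φ volume a b := hφ.intervalIntegrable a b
  have split := intervalIntegral.sum_integral_adjacent_intervals (f := φ) (n := k)
    (a := fun i : ℕ => i * h) fun i _ => hint _ _
  rw [Nat.cast_zero, zero_mul] at split
  rw [← split, ← Finset.sum_sub_distrib]
  refine (Finset.abs_sum_le_sum_abs _ _).trans ?_
  have cell (i : ℕ) (hi : i ∈ Finset.range k) :
      |h * φ (i * h) - ∫ u in (i * h)..((i + 1 : ℕ) * h), φ u| ≤ h * η := by
    push_cast
    have hcell : (i : ℝ) * h ≤ (i + 1) * h := by gcongr; simp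
    have hlen : ((i : ℝ) + 1) * h - i * h = h := by ring
    calc _ = |∫ u in (i * h)..((i + 1) * h), (φ (i * h) - φ u)| := by
          rw [intervalIntegral.integral_sub intervalIntegrable_const (hint _ _),
            intervalIntegral.integral_const, hlen, smul_eq_mul]
      _ ≤ η * |(i + 1) * h - i * h| := by
          rw [← Real.norm_eq_abs]
          exact intervalIntegral.norm_integral_le_of_norm_le_const fun u hu =>
            hosc i (Finset.mem_range.1 hi) u (Ioc_subset_Icc_self (uIoc_of_le hcell ▸ hu))
      _ = h * η := by rw [hlen, abs_of_nonneg hh, mul_comm]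
  simpa [mul_assoc] using Finset.sum_le_card_nsmul _ _ _ cell

lemma tendsto_riemannSum (hφ : Continuous φ) (ht : 0 ≤ t) :
    Tendsto (fun h => ∑ i ∈ Finset.range (gridCount h t), h * φ (i * h)) (𝓝[>] 0)
      (𝓝 (∫ u in (0 : ℝ)..t, φ u)) := by
  have hprim : Tendsto (fun h => ∫ u in (0 : ℝ)..gridCount h t * h, φ u) (𝓝[>] 0)
      (𝓝 (∫ u in (0 : ℝ)..t, φ u)) :=
    ((intervalIntegral.continuous_primitive (fun _ _ => hφ.intervalIntegrable _ _) 0).tendsto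
      t).comp (tendsto_gridCount_mul ht)
  suffices hdiff : Tendsto (fun h => ∑ i ∈ Finset.range (gridCount h t), h * φ (i * h)
      - ∫ u in (0 : ℝ)..gridCount h t * h, φ u) (𝓝[>] 0) (𝓝 0) by
    simpa using hdiff.add hprim
  refine Metric.tendsto_nhds.2 fun η hη => ?_
  have hη' : 0 < η / (t + 2) := by positivity
  filter_upwards [eventually_forall_abs_sub_le hφ (t + 1) hη', Ioo_mem_nhdsGT one_pos]
    with h hosc ⟨hh, hh1⟩
  have hend : gridCount h t * h ≤ t + 1 := (gridCount_mul_le ht).trans (by linarith)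
  have hcell (i : ℕ) (hi : i < gridCount h t) : (i : ℝ) * h ∈ Icc 0 ((i + 1) * h) ∧
      (i + 1) * h ≤ t + 1 := by
    have hi' : ((i + 1 : ℕ) : ℝ) ≤ gridCount h t := by exact_mod_cast hi
    push_cast at hi'
    exact ⟨⟨by positivity, by linarith⟩, by nlinarith⟩
  rw [dist_zero_right, Real.norm_eq_abs]
  calc _ ≤ gridCount h t * h * (η / (t + 2)) :=
        abs_sum_sub_integral_le hφ hh.le _ fun i hi u hu => by
          obtain ⟨⟨h0, -⟩, h1⟩ := hcell i hi
          exact hosc _ ⟨h0, by linarith⟩ u ⟨h0.trans hu.1, hu.2.trans h1⟩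
            (by rw [abs_sub_comm, abs_le]; constructor <;> linarith [hu.1, hu.2])
    _ ≤ (t + 1) * (η / (t + 2)) := by gcongr
    _ < η := by rw [mul_div_assoc', div_lt_iff₀ (by positivity)]; nlinarith

end Grid

section OptionalTimes

variable {Ω : Type*} {m : MeasurableSpace Ω} {ℱ : Filtration ℝ m} {τ : Ω → ℝ}

/-- Optional times of a filtration, i.e. stopping times of its right-continuation. They are kept
real-valued because every time used here is bounded. -/
def IsOptionalTime (ℱ : Filtration ℝ m) (τ : Ω → ℝ) : Prop :=
  ∀ t, MeasurableSet[ℱ t] {ω | τ ω < t}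

namespace IsOptionalTime

lemma measurable (hτ : IsOptionalTime ℱ τ) : Measurable τ :=
  measurable_of_Iio fun t => ℱ.le t _ (hτ t)

lemma measurableSet_le (hτ : IsOptionalTime ℱ τ) (t : ℝ) : MeasurableSet[ℱ t] {ω | t ≤ τ ω} := by
  simpa only [compl_ofPred, not_lt] using (hτ t).compl

lemma measurableSet_gridCount_eq (hτ : IsOptionalTime ℱ τ) (hτ0 : ∀ ω, 0 ≤ τ ω) {h : ℝ}
    (hh : 0 < h) (j : ℕ) : MeasurableSet[ℱ (j * h)] {ω | gridCount h (τ ω) = j} := by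
  have hlt (i : ℕ) : {ω | i < gridCount h (τ ω)} = {ω | i * h ≤ τ ω} := by
    ext ω
    exact lt_gridCount_iff hh (hτ0 ω)
  cases j with
  | zero => simp [gridCount]
  | succ j =>
    have hsplit : {ω | gridCount h (τ ω) = j + 1}
        = {ω | j < gridCount h (τ ω)} \ {ω | j + 1 < gridCount h (τ ω)} := by
      ext ω
      simp only [mem_ofPred_eq, Set.mem_sdiff]
      omega
    rw [hsplit, hlt, hlt]
    refine (ℱ.mono ?_ _ (hτ.measurableSet_le _)).diff (hτ.measurableSet_le _)
    gcongr
    exact j.le_succ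

end IsOptionalTime

end OptionalTimes

namespace IsBESQ

section Overshoot

variable {Ω : Type*} {m : MeasurableSpace Ω} {μ : Measure Ω} [IsProbabilityMeasure μ]
  {ℱ : Filtration ℝ m} {δ y : ℝ} {Y : ℝ → Ω → ℝ} {τ : Ω → ℝ} {T : ℝ}

lemma measurable_eval {μ : Measure Ω} (hY : IsBESQ μ ℱ δ y Y) (hτ : Measurable τ) :
    Measurable fun ω => Y (τ ω) ω :=
  (measurable_uncurry_of_continuous_of_measurable hY.cont hY.measurable).comp
    (hτ.prodMk measurable_id)

lemma tendsto_eval_gridCount {μ : Measure Ω} (hY : IsBESQ μ ℱ δ y Y) {ω : Ω} {t : ℝ} (ht : 0 ≤ t) :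
    Tendsto (fun h => Y (gridCount h t * h) ω) (𝓝[>] 0) (𝓝 (Y t ω)) :=
  ((hY.cont ω).tendsto t).comp (tendsto_gridCount_mul ht)

lemma setIntegral_sq_mono (hY : IsBESQ μ ℱ δ y Y) (hδ : 0 ≤ δ) {s t : ℝ} (hs : 0 ≤ s)
    (hst : s ≤ t) {A : Set Ω} (hA : MeasurableSet[ℱ s] A) :
    ∫ ω in A, Y s ω ^ 2 ∂μ ≤ ∫ ω in A, Y t ω ^ 2 ∂μ := by
  rw [hY.setIntegral_sq hs hst hA]
  have hmean : 0 ≤ (2 * δ + 4) * (t - s) * ∫ ω in A, Y s ω ∂μ :=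
    mul_nonneg (mul_nonneg (by positivity) (sub_nonneg.2 hst)) (integral_nonneg (hY.nonneg s))
  have hconst : 0 ≤ (2 * δ + δ ^ 2) * (t - s) ^ 2 * μ.real A := by positivity
  linarith

lemma measurable_eval_gridCount {μ : Measure Ω} (hY : IsBESQ μ ℱ δ y Y) (hτ : Measurable τ)
    (h : ℝ) : Measurable fun ω => Y (gridCount h (τ ω) * h) ω :=
  hY.measurable_eval ((measurable_from_nat.comp ((measurable_gridCount h).comp hτ)).mul_const h)

lemma integrable_sq_eval_gridCount {μ : Measure Ω} (hY : IsBESQ μ ℱ δ y Y) (hτ : Measurable τ)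
    (hτT : ∀ ω, τ ω ≤ T) {h : ℝ} (hh : 0 < h) :
    Integrable (fun ω => Y (gridCount h (τ ω) * h) ω ^ 2) μ := by
  refine (integrable_finsetSum (Finset.range (gridCount h T + 1))
    fun j _ => hY.integrable_sq (j * h)).mono'
    ((hY.measurable_eval_gridCount hτ h).pow_const 2).aestronglyMeasurable
    (ae_of_all _ fun ω => ?_)
  rw [Real.norm_of_nonneg (sq_nonneg _)]
  exact Finset.single_le_sum (f := fun j : ℕ => Y (j * h) ω ^ 2) (fun _ _ => sq_nonneg _)
    (Finset.mem_range_succ_iff.2 (gridCount_mono hh (hτT ω)))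

lemma setIntegral_sq_eval_gridCount_le (hY : IsBESQ μ ℱ δ y Y) (hδ : 0 ≤ δ)
    (hτ : IsOptionalTime ℱ τ) (hτ0 : ∀ ω, 0 ≤ τ ω) (hτT : ∀ ω, τ ω ≤ T) {h : ℝ} (hh : 0 < h)
    (hh1 : h ≤ 1) (b : ℝ) :
    ∫ ω in {ω | b < Y (gridCount h (τ ω) * h) ω}, Y (gridCount h (τ ω) * h) ω ^ 2 ∂μ
      ≤ ∫ ω in {ω | b < Y (gridCount h (τ ω) * h) ω}, Y (T + 1) ω ^ 2 ∂μ := by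
  set A : ℕ → Set Ω := fun j => {ω | gridCount h (τ ω) = j} ∩ {ω | b < Y (j * h) ω}
  have hA (j : ℕ) : MeasurableSet[ℱ (j * h)] (A j) :=
    (hτ.measurableSet_gridCount_eq hτ0 hh j).inter (hY.adapted _ measurableSet_Ioi)
  have partition : {ω | b < Y (gridCount h (τ ω) * h) ω}
      = ⋃ j ∈ Finset.range (gridCount h T + 1), A j := by
    ext ω
    have := gridCount_mono hh (hτT ω)
    simp [A, this]
  obtain ⟨ω₀⟩ := nonempty_of_isProbabilityMeasure μ
  have end_le (j : ℕ) (hj : j ∈ Finset.range (gridCount h T + 1)) : j * h ≤ T + 1 := by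
    have hT := gridCount_mul_le (h := h) ((hτ0 ω₀).trans (hτT ω₀))
    have hj' : (j : ℝ) ≤ gridCount h T := by exact_mod_cast Finset.mem_range_succ_iff.1 hj
    nlinarith
  have hmeas (j : ℕ) (_ : j ∈ Finset.range (gridCount h T + 1)) : MeasurableSet (A j) :=
    ℱ.le _ _ (hA j)
  have hdisj : (Finset.range (gridCount h T + 1) : Set ℕ).PairwiseDisjoint A :=
    fun i _ j _ hij => disjoint_left.2 fun ω hi hj => hij (hi.1.symm.trans hj.1)
  rw [partition, integral_biUnion_finset _ hmeas hdisj, integral_biUnion_finset _ hmeas hdisj]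
  · refine Finset.sum_le_sum fun j hj => ?_
    rw [setIntegral_congr_fun (g := fun ω => Y (j * h) ω ^ 2) (hmeas j hj)
      fun ω hω => by simp only [show gridCount h (τ ω) = j from hω.1]]
    exact hY.setIntegral_sq_mono hδ (by positivity) (end_le j hj) (hA j)
  · exact fun j _ => (hY.integrable_sq _).integrableOn
  · exact fun j hj => ((hY.integrable_sq (j * h)).integrableOn.congr_fun (fun ω hω => by
      simp only [show gridCount h (τ ω) = j from hω.1]) (hmeas j hj))

lemma tendsto_setIntegral_overshoot {μ : Measure Ω} (hY : IsBESQ μ ℱ δ y Y) (hτ : Measurable τ)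
    (hτ0 : ∀ ω, 0 ≤ τ ω) {b : ℝ} (hb : ∀ ω, Y (τ ω) ω < b) {g : Ω → ℝ} (hg : Integrable g μ) :
    Tendsto (fun h => ∫ ω in {ω | b < Y (gridCount h (τ ω) * h) ω}, g ω ∂μ) (𝓝[>] 0) (𝓝 0) := by
  have hA (h : ℝ) : MeasurableSet {ω | b < Y (gridCount h (τ ω) * h) ω} :=
    hY.measurable_eval_gridCount hτ h measurableSet_Ioi
  refine Tendsto.congr (fun h => integral_indicator (hA h)) ?_
  have hlim (ω : Ω) : Tendsto (fun h => {ω | b < Y (gridCount h (τ ω) * h) ω}.indicator g ω)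
      (𝓝[>] 0) (𝓝 0) := by
    refine tendsto_const_nhds.congr' ?_
    filter_upwards [(hY.tendsto_eval_gridCount (hτ0 ω)).eventually_lt_const (hb ω)] with h hlt
    rw [indicator_of_notMem]
    exact hlt.not_gt
  simpa only [integral_zero] using tendsto_integral_filter_of_dominated_convergence (fun ω => |g ω|)
    (.of_forall fun h => (hg.indicator (hA h)).aestronglyMeasurable)
    (.of_forall fun h => ae_of_all _ fun ω => norm_indicator_le_norm_self _ _) hg.abs
    (ae_of_all μ hlim)

lemma tendsto_setIntegral_eval_gridCount (hY : IsBESQ μ ℱ δ y Y) (hτ : Measurable τ)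
    (hτ0 : ∀ ω, 0 ≤ τ ω) {b : ℝ} (hb : ∀ ω, Y (τ ω) ω < b) {F : ℝ → Ω → ℝ} {F₀ : Ω → ℝ} {c : ℝ}
    (hc : 0 ≤ c) (hF : ∀ h, Measurable (F h))
    (hFle : ∀ h ω, |F h ω| ≤ c * (1 + Y (gridCount h (τ ω) * h) ω ^ 2))
    (hlim : ∀ ω, Tendsto (F · ω) (𝓝[>] 0) (𝓝 (F₀ ω))) :
    Tendsto (fun h => ∫ ω in {ω | b < Y (gridCount h (τ ω) * h) ω}ᶜ, F h ω ∂μ) (𝓝[>] 0)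
      (𝓝 (∫ ω, F₀ ω ∂μ)) := by
  have hA (h : ℝ) : MeasurableSet {ω | b < Y (gridCount h (τ ω) * h) ω} :=
    hY.measurable_eval_gridCount hτ h measurableSet_Ioi
  refine Tendsto.congr (fun h => integral_indicator (hA h).compl) ?_
  refine tendsto_integral_filter_of_dominated_convergence (fun _ => c * (1 + b ^ 2))
    (.of_forall fun h => ((hF h).indicator (hA h).compl).aestronglyMeasurable)
    (.of_forall fun h => ae_of_all _ fun ω => ?_) (integrable_const _) (ae_of_all _ fun ω => ?_)
  · rw [norm_indicator_eq_indicator_norm]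
    refine indicator_apply_le' (fun hω => (hFle h ω).trans ?_) fun _ => by positivity
    have hX0 := hY.nonneg (gridCount h (τ ω) * h) ω
    gcongr
    exact not_lt.1 hω
  · refine (hlim ω).congr' ?_
    filter_upwards [(hY.tendsto_eval_gridCount (hτ0 ω)).eventually_lt_const (hb ω)] with h hlt
    rw [indicator_of_mem]
    exact hlt.not_gt

lemma tendsto_integral_of_abs_le_one_add_sq (hY : IsBESQ μ ℱ δ y Y) (hδ : 0 ≤ δ)
    (hτ : IsOptionalTime ℱ τ) (hτ0 : ∀ ω, 0 ≤ τ ω) (hτT : ∀ ω, τ ω ≤ T) {b : ℝ}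
    (hb : ∀ ω, Y (τ ω) ω < b) {F : ℝ → Ω → ℝ} {F₀ : Ω → ℝ} {c : ℝ} (hc : 0 ≤ c)
    (hF : ∀ h, Measurable (F h))
    (hFle : ∀ h ω, |F h ω| ≤ c * (1 + Y (gridCount h (τ ω) * h) ω ^ 2))
    (hlim : ∀ ω, Tendsto (F · ω) (𝓝[>] 0) (𝓝 (F₀ ω))) :
    Tendsto (fun h => ∫ ω, F h ω ∂μ) (𝓝[>] 0) (𝓝 (∫ ω, F₀ ω ∂μ)) := by
  set A : ℝ → Set Ω := fun h => {ω | b < Y (gridCount h (τ ω) * h) ω}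
  have hA (h : ℝ) : MeasurableSet (A h) :=
    hY.measurable_eval_gridCount hτ.measurable h measurableSet_Ioi
  have hYint : Integrable (fun ω => c * (1 + Y (T + 1) ω ^ 2)) μ :=
    ((integrable_const 1).add (hY.integrable_sq _)).const_mul c
  have hXint {h : ℝ} (hh : 0 < h) :
      Integrable (fun ω => c * (1 + Y (gridCount h (τ ω) * h) ω ^ 2)) μ :=
    ((integrable_const 1).add (hY.integrable_sq_eval_gridCount hτ.measurable hτT hh)).const_mul c
  have hFint {h : ℝ} (hh : 0 < h) : Integrable (F h) μ :=
    (hXint hh).mono' (hF h).aestronglyMeasurable (ae_of_all _ (hFle h))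
  have hover : Tendsto (fun h => ∫ ω in A h, F h ω ∂μ) (𝓝[>] 0) (𝓝 0) := by
    refine squeeze_zero_norm' ?_ (hY.tendsto_setIntegral_overshoot hτ.measurable hτ0 hb hYint)
    filter_upwards [Ioo_mem_nhdsGT one_pos] with h ⟨hh, hh1⟩
    have hX2 := (hY.integrable_sq_eval_gridCount hτ.measurable hτT hh).integrableOn (s := A h)
    have hY2 := (hY.integrable_sq (T + 1)).integrableOn (s := A h)
    calc ‖∫ ω in A h, F h ω ∂μ‖
        ≤ ∫ ω in A h, c * (1 + Y (gridCount h (τ ω) * h) ω ^ 2) ∂μ :=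
          norm_integral_le_of_norm_le (hXint hh).integrableOn (ae_of_all _ (hFle h))
      _ ≤ ∫ ω in A h, c * (1 + Y (T + 1) ω ^ 2) ∂μ := by
          rw [integral_const_mul, integral_const_mul, integral_add (integrable_const _) hX2,
            integral_add (integrable_const _) hY2]
          exact mul_le_mul_of_nonneg_left (add_le_add_right
            (hY.setIntegral_sq_eval_gridCount_le hδ hτ hτ0 hτT hh hh1.le b) _) hc
  have hmain := hover.add
    (hY.tendsto_setIntegral_eval_gridCount hτ.measurable hτ0 hb hc hF hFle hlim)
  rw [zero_add] at hmain
  refine hmain.congr' ?_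
  filter_upwards [self_mem_nhdsWithin] with h hh
  exact integral_add_compl (hA h) (hFint hh)

end Overshoot

section QuadraticVariation

variable {Ω : Type*} {m : MeasurableSpace Ω} {μ : Measure Ω} [IsProbabilityMeasure μ]
  {ℱ : Filtration ℝ m} {δ y : ℝ} {Y : ℝ → Ω → ℝ} {τ : Ω → ℝ} {T : ℝ}

lemma integrable_sub_sq {μ : Measure Ω} (hY : IsBESQ μ ℱ δ y Y) (s t : ℝ) :
    Integrable (fun ω => (Y t ω - Y s ω) ^ 2) μ :=
  ((hY.memLp_two t).sub (hY.memLp_two s)).integrable_sq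

lemma condExp_indicator_sub_sq_le (hY : IsBESQ μ ℱ δ y Y) (hδ : 0 ≤ δ) {s t : ℝ} (hs : 0 ≤ s)
    (hst : s ≤ t) (hst1 : t - s ≤ 1) {A B : Set Ω} (hA : MeasurableSet[ℱ s] A)
    (hB : MeasurableSet B) (hBA : B ⊆ A) {K : ℝ} (hK0 : 0 ≤ K) (hK : ∀ ω ∈ A, Y s ω ≤ K) :
    μ[B.indicator fun ω => (Y t ω - Y s ω) ^ 2 | ℱ s]
      ≤ᵐ[μ] fun _ => (t - s) * (4 * K + 2 * δ + δ ^ 2) := by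
  have hint := hY.integrable_sub_sq s t
  have hst0 : 0 ≤ t - s := sub_nonneg.2 hst
  filter_upwards [condExp_mono (m := ℱ s) (hint.indicator hB) (hint.indicator (ℱ.le s A hA))
      (ae_of_all μ fun ω => indicator_le_indicator_of_subset hBA (fun _ => sq_nonneg _) ω),
    condExp_indicator hint hA, hY.condExp_sub_sq hs hst] with ω hmono hind hsq
  refine (hmono.trans_eq hind).trans (indicator_apply_le' (fun hω => ?_) fun _ => by positivity)
  refine hsq.trans_le ?_
  nlinarith [mul_le_mul_of_nonneg_left (hK ω hω) hst0,
    mul_nonneg hst0 (mul_nonneg (sub_nonneg.2 hst1) (by positivity : 0 ≤ 2 * δ + δ ^ 2))]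

/-- The increment of `Y` over the `i`-th cell of the grid of mesh `h`. -/
def gridIncrement (Y : ℝ → Ω → ℝ) (h : ℝ) (i : ℕ) (ω : Ω) : ℝ :=
  Y ((i + 1 : ℕ) * h) ω - Y (i * h) ω

/-- The quadratic variation of `Y` along the cells of the grid of mesh `h` that lie in `[0, τ]`;
`T` is any upper bound for `τ`. -/
noncomputable def gridQuadVar (Y : ℝ → Ω → ℝ) (τ : Ω → ℝ) (T h : ℝ) (ω : Ω) : ℝ :=
  ∑ i ∈ Finset.range (gridCount h T),
    {ω | (i + 1 : ℕ) * h ≤ τ ω}.indicator (fun ω => gridIncrement Y h i ω ^ 2) ω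

/-- The largest increment of `Y` over a cell of the grid of mesh `h` that meets `[0, T]`,
truncated at `1`. -/
noncomputable def gridOscillation (Y : ℝ → Ω → ℝ) (T h : ℝ) (ω : Ω) : ℝ :=
  (Finset.range (gridCount h T)).sup' (Finset.nonempty_range_iff.2 (Nat.succ_ne_zero _))
    fun i => min 1 |gridIncrement Y h i ω|

lemma indicator_gridIncrement_sq_le {μ : Measure Ω} (hY : IsBESQ μ ℱ δ y Y) {K : ℝ}
    (hK : ∀ ω, ∀ t ∈ Icc 0 (τ ω), Y t ω ≤ K) {h : ℝ} (hh : 0 ≤ h) (i : ℕ) (ω : Ω) :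
    {ω | (i + 1 : ℕ) * h ≤ τ ω}.indicator (fun ω => gridIncrement Y h i ω ^ 2) ω ≤ K ^ 2 := by
  refine indicator_apply_le' (fun hω => ?_) fun _ => sq_nonneg K
  have hcell : (i : ℝ) * h ≤ (i + 1 : ℕ) * h := by gcongr; exact i.le_succ
  have h1 : Y ((i + 1 : ℕ) * h) ω ≤ K := hK ω _ ⟨by positivity, hω⟩
  have h0 : Y (i * h) ω ≤ K := hK ω _ ⟨by positivity, hcell.trans hω⟩
  have h1' := hY.nonneg ((i + 1 : ℕ) * h) ω
  have h0' := hY.nonneg (i * h) ω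
  unfold gridIncrement
  exact sq_le_sq' (by linarith) (by linarith)

lemma integral_gridQuadVar_sq_le (hY : IsBESQ μ ℱ δ y Y) (hδ : 0 ≤ δ) (hτ : IsOptionalTime ℱ τ)
    {K : ℝ} (hK0 : 0 ≤ K) (hK : ∀ ω, ∀ t ∈ Icc 0 (τ ω), Y t ω ≤ K) (hT : 0 ≤ T) {h : ℝ}
    (hh : 0 < h) (hh1 : h ≤ 1) :
    ∫ ω, gridQuadVar Y τ T h ω ^ 2 ∂μ
      ≤ (T + 1) * (4 * K + 2 * δ + δ ^ 2) * ((T + 1) * (4 * K + 2 * δ + δ ^ 2) + K ^ 2) := by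
  have hmono : Monotone fun i : ℕ => (i : ℝ) * h := fun i j hij => by dsimp only; gcongr
  let 𝒢 : Filtration ℕ m :=
    ⟨fun i => ℱ (i * h), fun i j hij => ℱ.mono (hmono hij), fun i => ℱ.le _⟩
  have hlen (i : ℕ) : ((i + 1 : ℕ) : ℝ) * h - i * h = h := by push_cast; ring
  have hA (i : ℕ) : MeasurableSet[ℱ (i * h)] {ω | i * h ≤ τ ω} := hτ.measurableSet_le _
  have hcount : gridCount h T * (h * (4 * K + 2 * δ + δ ^ 2))
      ≤ (T + 1) * (4 * K + 2 * δ + δ ^ 2) := by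
    rw [← mul_assoc]
    gcongr
    exact (gridCount_mul_le hT).trans (by linarith)
  refine (integral_sum_sq_le (𝒢 := 𝒢) (b := K ^ 2) (c := h * (4 * K + 2 * δ + δ ^ 2))
    (by positivity) (fun i => ?_) (fun i ω => indicator_nonneg (fun _ _ => sq_nonneg _) _)
    (hY.indicator_gridIncrement_sq_le hK hh.le) (fun i => ?_) _).trans (by gcongr)
  · refine StronglyMeasurable.indicator ?_ (hA (i + 1))
    exact (((hY.adapted _).sub ((hY.adapted _).mono (ℱ.mono (hmono i.le_succ)) le_rfl)).pow_const
      2).stronglyMeasurable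
  · have := hY.condExp_indicator_sub_sq_le hδ (by positivity) (hmono i.le_succ)
      ((hlen i).trans_le hh1) (hA i) (ℱ.le _ _ (hA (i + 1)))
      (fun ω hω => (hmono i.le_succ).trans hω) hK0 fun ω hω => hK ω _ ⟨by positivity, hω⟩
    rwa [hlen] at this

lemma measurable_gridIncrement {μ : Measure Ω} (hY : IsBESQ μ ℱ δ y Y) (h : ℝ) (i : ℕ) :
    Measurable (gridIncrement Y h i) := (hY.measurable _).sub (hY.measurable _)

lemma memLp_gridQuadVar (hY : IsBESQ μ ℱ δ y Y) (hτ : IsOptionalTime ℱ τ) {K : ℝ}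
    (hK : ∀ ω, ∀ t ∈ Icc 0 (τ ω), Y t ω ≤ K) {h : ℝ} (hh : 0 < h) :
    MemLp (gridQuadVar Y τ T h) 2 μ := by
  refine memLp_finsetSum _ fun i _ => .of_bound (C := K ^ 2) ?_ (ae_of_all _ fun ω => ?_)
  · exact (((hY.measurable_gridIncrement h i).pow_const 2).indicator
      (ℱ.le _ _ (hτ.measurableSet_le _))).aestronglyMeasurable
  · rw [Real.norm_of_nonneg (indicator_nonneg (fun _ _ => sq_nonneg _) _)]
    exact hY.indicator_gridIncrement_sq_le hK hh.le i ω

lemma gridQuadVar_nonneg (Y : ℝ → Ω → ℝ) (τ : Ω → ℝ) (T h : ℝ) (ω : Ω) :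
    0 ≤ gridQuadVar Y τ T h ω :=
  Finset.sum_nonneg fun _ _ => indicator_nonneg (fun _ _ => sq_nonneg _) _

lemma measurable_gridOscillation {μ : Measure Ω} (hY : IsBESQ μ ℱ δ y Y) (T h : ℝ) :
    Measurable (gridOscillation Y T h) := by
  have hsup := Finset.measurable_sup' (f := fun i ω => min 1 |gridIncrement Y h i ω|)
    (Finset.nonempty_range_iff.2 (Nat.succ_ne_zero ⌊T / h⌋₊))
    fun i _ => measurable_const.min (hY.measurable_gridIncrement h i).abs
  convert hsup using 1
  ext ω
  rw [Finset.sup'_apply]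
  rfl

lemma le_gridOscillation (Y : ℝ → Ω → ℝ) {T h : ℝ} {i : ℕ} (hi : i < gridCount h T) (ω : Ω) :
    min 1 |gridIncrement Y h i ω| ≤ gridOscillation Y T h ω :=
  Finset.le_sup' (fun i => min 1 |gridIncrement Y h i ω|) (Finset.mem_range.2 hi)

lemma gridOscillation_nonneg (Y : ℝ → Ω → ℝ) (T h : ℝ) (ω : Ω) : 0 ≤ gridOscillation Y T h ω :=
  (le_min zero_le_one (abs_nonneg _)).trans (le_gridOscillation Y (Nat.succ_pos _) ω)

lemma gridOscillation_le_one (Y : ℝ → Ω → ℝ) (T h : ℝ) (ω : Ω) : gridOscillation Y T h ω ≤ 1 :=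
  Finset.sup'_le _ _ fun _ _ => min_le_left _ _

lemma tendsto_gridOscillation {μ : Measure Ω} (hY : IsBESQ μ ℱ δ y Y) (hT : 0 ≤ T) (ω : Ω) :
    Tendsto (fun h => gridOscillation Y T h ω) (𝓝[>] 0) (𝓝 0) := by
  refine Metric.tendsto_nhds.2 fun η hη => ?_
  filter_upwards [eventually_forall_abs_sub_le (hY.cont ω) (T + 1) (half_pos hη),
    Ioo_mem_nhdsGT one_pos] with h hosc ⟨hh, hh1⟩
  rw [dist_zero_right, Real.norm_of_nonneg (gridOscillation_nonneg Y T h ω)]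
  refine (Finset.sup'_le _ _ fun i hi => (min_le_right _ _).trans ?_).trans_lt (half_lt_self hη)
  have hi' := (lt_gridCount_iff hh hT).1 (Finset.mem_range.1 hi)
  have hi0 : 0 ≤ i * h := by positivity
  refine hosc _ ⟨by positivity, ?_⟩ _ ⟨hi0, by linarith⟩ ?_ <;> push_cast
  · linarith
  · rw [add_one_mul, add_sub_cancel_left, abs_of_pos hh]

end QuadraticVariation

end IsBESQ

section TaylorExpansion

/-- `f` has a second-order Taylor expansion at the points of `s`, with derivatives `f'` and `f''`.
The remainder at `x ∈ s` is measured at every `z ≥ 0`, cubic in `z - x` near `s` and quadratic far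
from it, so that it can be summed over the cells of a grid. -/
structure HasTaylorOn (f f' f'' : ℝ → ℝ) (s : Set ℝ) : Prop where
  continuous : Continuous f
  continuous_fst : Continuous f'
  continuous_snd : Continuous f''
  exists_remainder_le : ∃ C, 0 ≤ C ∧ ∀ x ∈ s, ∀ z, 0 ≤ z →
    |f z - f x - (f' x * (z - x) + f'' x / 2 * (z - x) ^ 2)| ≤ C * (min 1 |z - x| * (z - x) ^ 2)

lemma HasTaylorOn.exists_abs_le {f f' f'' : ℝ → ℝ} {s : Set ℝ} (hf : HasTaylorOn f f' f'' s)
    (hs : s.Nonempty) : ∃ c, 0 ≤ c ∧ ∀ z, 0 ≤ z → |f z| ≤ c * (1 + z ^ 2) := by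
  obtain ⟨x, hx⟩ := hs
  obtain ⟨C, hC, hrem⟩ := hf.exists_remainder_le
  set M := |f x| + |f' x| + |f'' x| + C
  refine ⟨M * (2 + 2 * x ^ 2), by positivity, fun z hz => ?_⟩
  have hmin : min 1 |z - x| * (z - x) ^ 2 ≤ (z - x) ^ 2 :=
    mul_le_of_le_one_left (sq_nonneg _) (min_le_left _ _)
  have hlin : |z - x| ≤ 1 + (z - x) ^ 2 := by
    nlinarith [sq_abs (z - x), sq_nonneg (|z - x| - 1), abs_nonneg (z - x)]
  calc |f z| = |f x + f' x * (z - x) + f'' x / 2 * (z - x) ^ 2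
        + (f z - f x - (f' x * (z - x) + f'' x / 2 * (z - x) ^ 2))| := by congr 1; ring
    _ ≤ |f x| + |f' x| * |z - x| + |f'' x| / 2 * (z - x) ^ 2 + C * (z - x) ^ 2 := by
        refine (abs_add_le _ _).trans (add_le_add ?_ ((hrem x hx z hz).trans (by gcongr)))
        refine (abs_add_three _ _ _).trans_eq ?_
        simp [abs_mul, abs_div]
    _ ≤ M * (1 + (z - x) ^ 2) := by
        have := mul_le_mul_of_nonneg_left hlin (abs_nonneg (f' x))
        simp only [M]
        nlinarith [abs_nonneg (f x), abs_nonneg (f'' x), sq_nonneg (z - x),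
          mul_nonneg (abs_nonneg (f x)) (sq_nonneg (z - x)),
          mul_nonneg (abs_nonneg (f'' x)) (sq_nonneg (z - x))]
    _ ≤ M * ((2 + 2 * x ^ 2) * (1 + z ^ 2)) := by
        gcongr
        nlinarith [sq_nonneg (z + x), mul_nonneg (sq_nonneg x) (sq_nonneg z)]
    _ = M * (2 + 2 * x ^ 2) * (1 + z ^ 2) := by ring

/-- The generator `2 x f'' + δ f'` of the squared Bessel process of dimension `δ`, as a function of
the two derivatives. -/
def besqGenerator (δ : ℝ) (f' f'' : ℝ → ℝ) (x : ℝ) : ℝ := 2 * x * f'' x + δ * f' x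

lemma continuous_besqGenerator (δ : ℝ) {f' f'' : ℝ → ℝ} (hf' : Continuous f')
    (hf'' : Continuous f'') : Continuous (besqGenerator δ f' f'') :=
  ((continuous_const.mul continuous_id).mul hf'').add (continuous_const.mul hf')

/-- The conditional mean, given its left end point `x`, of the second-order Taylor polynomial of `f`
over a grid cell of length `h`. -/
noncomputable def cellDrift (δ : ℝ) (f' f'' : ℝ → ℝ) (h x : ℝ) : ℝ :=
  h * besqGenerator δ f' f'' x + (2 * δ + δ ^ 2) * h ^ 2 * (f'' x / 2)

lemma exists_norm_cellDrift_le (δ : ℝ) {f' f'' : ℝ → ℝ} (hf' : Continuous f')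
    (hf'' : Continuous f'') (a b : ℝ) :
    ∃ M, ∀ h ∈ Icc (0 : ℝ) 1, ∀ x ∈ Icc a b, ‖cellDrift δ f' f'' h x‖ ≤ h * M := by
  have hcont : Continuous fun p : ℝ × ℝ =>
      besqGenerator δ f' f'' p.2 + (2 * δ + δ ^ 2) * p.1 * (f'' p.2 / 2) := by
    have := continuous_besqGenerator δ hf' hf''
    fun_prop
  obtain ⟨M, hM⟩ := (isCompact_Icc.prod isCompact_Icc).exists_bound_of_continuousOn
    (s := Icc 0 1 ×ˢ Icc a b) hcont.continuousOn
  refine ⟨M, fun h hh x hx => ?_⟩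
  calc ‖cellDrift δ f' f'' h x‖
      = h * ‖besqGenerator δ f' f'' x + (2 * δ + δ ^ 2) * h * (f'' x / 2)‖ := by
        rw [← Real.norm_of_nonneg hh.1, ← norm_mul, Real.norm_of_nonneg hh.1, cellDrift]
        ring_nf
    _ ≤ h * M := mul_le_mul_of_nonneg_left (hM (h, x) ⟨hh, hx⟩) hh.1

section

variable {Ω : Type*} {m₀ m : MeasurableSpace Ω} {μ : Measure Ω} [IsProbabilityMeasure μ]

lemma setIntegral_mul_eq_of_condExp_eq (hm : m₀ ≤ m) {A : Set Ω} (hA : MeasurableSet[m₀] A)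
    {w f g : Ω → ℝ} (hw : StronglyMeasurable[m₀] w) {C : ℝ} (hC : ∀ ω ∈ A, |w ω| ≤ C)
    (hf : Integrable f μ) (hfg : μ[f | m₀] =ᵐ[μ] g) :
    ∫ ω in A, w ω * f ω ∂μ = ∫ ω in A, w ω * g ω ∂μ := by
  have hC' (ω : Ω) : |A.indicator w ω| ≤ |C| := by
    rw [← Real.norm_eq_abs, norm_indicator_eq_indicator_norm]
    exact indicator_apply_le' (fun hω => (hC ω hω).trans (le_abs_self C)) fun _ => abs_nonneg C
  have key := integral_mul_eq_integral_mul_condExp hm (hw.indicator hA) hC' hf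
  rw [integral_congr_ae ((EventuallyEq.refl (ae μ) (A.indicator w)).fun_mul hfg)] at key
  simpa only [← indicator_mul_left, integral_indicator (hm A hA)] using key

end

lemma sum_range_gridCount {Ω : Type*} {τ : Ω → ℝ} {T h : ℝ} (hh : 0 < h) {ω : Ω} (hτ0 : 0 ≤ τ ω)
    (hτT : τ ω ≤ T) (G : ℕ → Ω → ℝ) :
    ∑ i ∈ Finset.range (gridCount h (τ ω)), G i ω
      = ∑ i ∈ Finset.range (gridCount h T), {ω | i * h ≤ τ ω}.indicator (G i) ω := by
  have hfilter : Finset.range (gridCount h (τ ω))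
      = {i ∈ Finset.range (gridCount h T) | ((i : ℕ) : ℝ) * h ≤ τ ω} := by
    ext i
    simp only [Finset.mem_filter, Finset.mem_range, lt_gridCount_iff hh hτ0,
      lt_gridCount_iff hh (hτ0.trans hτT)]
    exact ⟨fun hi => ⟨hi.trans hτT, hi⟩, And.right⟩
  rw [hfilter, Finset.sum_filter]
  rfl

end TaylorExpansion

/-- `τ` is an optional time with values in `[0, T]`, and `Y` stays in `[a, b]` up to time `τ`. -/
structure IsConfinedTime {Ω : Type*} {m : MeasurableSpace Ω} (ℱ : Filtration ℝ m) (Y : ℝ → Ω → ℝ)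
    (a b T : ℝ) (τ : Ω → ℝ) : Prop where
  isOptionalTime : IsOptionalTime ℱ τ
  nonneg : ∀ ω, 0 ≤ τ ω
  le : ∀ ω, τ ω ≤ T
  mem_Icc : ∀ ω, ∀ t ∈ Icc 0 (τ ω), Y t ω ∈ Icc a b

namespace IsConfinedTime

variable {Ω : Type*} {m : MeasurableSpace Ω} {ℱ : Filtration ℝ m} {Y : ℝ → Ω → ℝ}
  {a b a' b' T : ℝ} {τ : Ω → ℝ}

lemma mono (hτ : IsConfinedTime ℱ Y a b T τ) (hab : Icc a b ⊆ Icc a' b') :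
    IsConfinedTime ℱ Y a' b' T τ :=
  { hτ with mem_Icc := fun ω t ht => hab (hτ.mem_Icc ω t ht) }

lemma eval_mem_Icc (hτ : IsConfinedTime ℱ Y a b T τ) (ω : Ω) : Y (τ ω) ω ∈ Icc a b :=
  hτ.mem_Icc ω _ ⟨hτ.nonneg ω, le_rfl⟩

end IsConfinedTime

namespace IsBESQ

section Dynkin

variable {Ω : Type*} {m : MeasurableSpace Ω} {μ : Measure Ω} [IsProbabilityMeasure μ]
  {ℱ : Filtration ℝ m} {δ y : ℝ} {Y : ℝ → Ω → ℝ} {τ : Ω → ℝ} {T a b : ℝ} {f f' f'' : ℝ → ℝ}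

/-- The second-order Taylor polynomial of `f` at the left end point of the `i`-th cell of the grid
of mesh `h`, evaluated at the increment of `Y` over that cell. -/
noncomputable def gridTaylor (f' f'' : ℝ → ℝ) (Y : ℝ → Ω → ℝ) (h : ℝ) (i : ℕ) (ω : Ω) : ℝ :=
  f' (Y (i * h) ω) * gridIncrement Y h i ω + f'' (Y (i * h) ω) / 2 * gridIncrement Y h i ω ^ 2

lemma setIntegral_gridTaylor (hY : IsBESQ μ ℱ δ y Y) (hf' : Continuous f') (hf'' : Continuous f'')
    {h : ℝ} (hh : 0 ≤ h) (i : ℕ) {A : Set Ω} (hA : MeasurableSet[ℱ (i * h)] A)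
    (hYA : ∀ ω ∈ A, Y (i * h) ω ∈ Icc a b) :
    (IntegrableOn (gridTaylor f' f'' Y h i) A μ ∧
      IntegrableOn (fun ω => cellDrift δ f' f'' h (Y (i * h) ω)) A μ) ∧
      ∫ ω in A, gridTaylor f' f'' Y h i ω ∂μ = ∫ ω in A, cellDrift δ f' f'' h (Y (i * h) ω) ∂μ := by
  have hs : 0 ≤ (i : ℝ) * h := by positivity
  have hlen : ((i + 1 : ℕ) : ℝ) * h - i * h = h := by push_cast; ring
  have hst : (i : ℝ) * h ≤ (i + 1 : ℕ) * h := by linarith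
  have mul {φ : ℝ → ℝ} (hφ : Continuous φ) {g g' : Ω → ℝ} (hg : Integrable g μ)
      (hg' : Integrable g' μ) (hgg' : μ[g | ℱ (i * h)] =ᵐ[μ] g') :
      IntegrableOn (fun ω => φ (Y (i * h) ω) * g ω) A μ ∧
        IntegrableOn (fun ω => φ (Y (i * h) ω) * g' ω) A μ ∧
        ∫ ω in A, φ (Y (i * h) ω) * g ω ∂μ = ∫ ω in A, φ (Y (i * h) ω) * g' ω ∂μ := by
    obtain ⟨M, hM⟩ := (isCompact_Icc (a := a) (b := b)).exists_bound_of_continuousOn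
      hφ.continuousOn
    have hM' (ω : Ω) (hω : ω ∈ A) : ‖φ (Y (i * h) ω)‖ ≤ M := hM _ (hYA ω hω)
    have hmeas : Measurable fun ω => φ (Y (i * h) ω) := hφ.measurable.comp (hY.measurable _)
    have bdd : ∀ᵐ ω ∂μ.restrict A, ‖φ (Y (i * h) ω)‖ ≤ M :=
      (ae_restrict_iff' (ℱ.le _ _ hA)).2 (ae_of_all _ hM')
    exact ⟨hg.integrableOn.bdd_mul hmeas.aestronglyMeasurable bdd,
      hg'.integrableOn.bdd_mul hmeas.aestronglyMeasurable bdd,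
      setIntegral_mul_eq_of_condExp_eq (ℱ.le _) hA
        (hφ.measurable.comp (hY.adapted _)).stronglyMeasurable hM' hg hgg'⟩
  obtain ⟨int₁, int₁', eq₁⟩ := mul hf' ((hY.integrable _).sub (hY.integrable _))
    (integrable_const _) (hY.condExp_sub hs hst)
  obtain ⟨int₂, int₂', eq₂⟩ := mul (hf''.div_const 2) (hY.integrable_sub_sq _ _)
    (((hY.integrable _).const_mul _).add (integrable_const _)) (hY.condExp_sub_sq hs hst)
  have hdrift (ω : Ω) : f' (Y (i * h) ω) * (δ * ((i + 1 : ℕ) * h - i * h))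
      + f'' (Y (i * h) ω) / 2 * (4 * ((i + 1 : ℕ) * h - i * h) * Y (i * h) ω
        + (2 * δ + δ ^ 2) * ((i + 1 : ℕ) * h - i * h) ^ 2)
      = cellDrift δ f' f'' h (Y (i * h) ω) := by
    rw [hlen, cellDrift, besqGenerator]
    ring
  refine ⟨⟨int₁.add int₂, (int₁'.add int₂').congr (ae_of_all _ hdrift)⟩, ?_⟩
  calc _ = _ := (integral_add int₁ int₂).trans (congrArg₂ _ eq₁ eq₂)
    _ = _ := (integral_add int₁' int₂').symm.trans (integral_congr_ae (ae_of_all _ hdrift))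

lemma integral_sum_gridTaylor (hY : IsBESQ μ ℱ δ y Y) (hτ : IsConfinedTime ℱ Y a b T τ)
    (hf' : Continuous f') (hf'' : Continuous f'') {h : ℝ} (hh : 0 < h) :
    (Integrable (fun ω => ∑ i ∈ Finset.range (gridCount h (τ ω)), gridTaylor f' f'' Y h i ω) μ ∧
      Integrable (fun ω => ∑ i ∈ Finset.range (gridCount h (τ ω)),
        cellDrift δ f' f'' h (Y (i * h) ω)) μ) ∧
      ∫ ω, ∑ i ∈ Finset.range (gridCount h (τ ω)), gridTaylor f' f'' Y h i ω ∂μ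
        = ∫ ω, ∑ i ∈ Finset.range (gridCount h (τ ω)), cellDrift δ f' f'' h (Y (i * h) ω) ∂μ := by
  have reindex (G : ℕ → Ω → ℝ) : (fun ω => ∑ i ∈ Finset.range (gridCount h (τ ω)), G i ω)
      = fun ω => ∑ i ∈ Finset.range (gridCount h T), {ω | i * h ≤ τ ω}.indicator (G i) ω :=
    funext fun ω => sum_range_gridCount hh (hτ.nonneg ω) (hτ.le ω) G
  rw [reindex (gridTaylor f' f'' Y h), reindex fun i ω => cellDrift δ f' f'' h (Y (i * h) ω)]
  have hA (i : ℕ) : MeasurableSet[ℱ (i * h)] {ω | i * h ≤ τ ω} :=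
    hτ.isOptionalTime.measurableSet_le _
  have cell (i : ℕ) := hY.setIntegral_gridTaylor hf' hf'' hh.le i (hA i)
    fun ω hω => hτ.mem_Icc ω _ ⟨by positivity, hω⟩
  have int (i : ℕ) := (cell i).1.1.integrable_indicator (ℱ.le _ _ (hA i))
  have int' (i : ℕ) := (cell i).1.2.integrable_indicator (ℱ.le _ _ (hA i))
  refine ⟨⟨integrable_finsetSum _ fun i _ => int i, integrable_finsetSum _ fun i _ => int' i⟩, ?_⟩
  rw [integral_finsetSum _ fun i _ => int i, integral_finsetSum _ fun i _ => int' i]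
  refine Finset.sum_congr rfl fun i _ => ?_
  rw [integral_indicator (ℱ.le _ _ (hA i)), integral_indicator (ℱ.le _ _ (hA i))]
  exact (cell i).2

lemma tendsto_sum_cellDrift {μ : Measure Ω} (hY : IsBESQ μ ℱ δ y Y) (hf' : Continuous f')
    (hf'' : Continuous f'') {t : ℝ} (ht : 0 ≤ t) (ω : Ω) :
    Tendsto (fun h => ∑ i ∈ Finset.range (gridCount h t), cellDrift δ f' f'' h (Y (i * h) ω))
      (𝓝[>] 0) (𝓝 (∫ u in (0 : ℝ)..t, besqGenerator δ f' f'' (Y u ω))) := by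
  have hgen := tendsto_riemannSum ((continuous_besqGenerator δ hf' hf'').comp (hY.cont ω)) ht
  have hsnd := tendsto_riemannSum (hf''.comp (hY.cont ω)) ht
  have hmesh : Tendsto (fun h : ℝ => (2 * δ + δ ^ 2) * h / 2) (𝓝[>] 0) (𝓝 0) := by
    have : Continuous fun h : ℝ => (2 * δ + δ ^ 2) * h / 2 := by fun_prop
    simpa using (this.tendsto 0).mono_left nhdsWithin_le_nhds
  have hsum := hgen.add (hmesh.mul hsnd)
  rw [zero_mul, add_zero] at hsum
  refine hsum.congr fun h => ?_
  rw [Finset.mul_sum, ← Finset.sum_add_distrib]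
  refine Finset.sum_congr rfl fun i _ => ?_
  simp only [cellDrift, Function.comp_apply]
  ring

lemma tendsto_integral_sum_cellDrift (hY : IsBESQ μ ℱ δ y Y) (hτ : IsConfinedTime ℱ Y a b T τ)
    (hf' : Continuous f') (hf'' : Continuous f'') :
    Tendsto (fun h => ∫ ω, ∑ i ∈ Finset.range (gridCount h (τ ω)),
        cellDrift δ f' f'' h (Y (i * h) ω) ∂μ) (𝓝[>] 0)
      (𝓝 (∫ ω, (∫ u in (0 : ℝ)..τ ω, besqGenerator δ f' f'' (Y u ω)) ∂μ)) := by
  obtain ⟨M, hM⟩ := exists_norm_cellDrift_le δ hf' hf'' a b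
  have mesh : ∀ᶠ h : ℝ in 𝓝[>] 0, h ∈ Ioo 0 1 := Ioo_mem_nhdsGT one_pos
  refine tendsto_integral_filter_of_dominated_convergence (fun _ => (T + 1) * |M|)
    (mesh.mono fun h hh => (hY.integral_sum_gridTaylor hτ hf' hf'' hh.1).1.2.aestronglyMeasurable)
    (mesh.mono fun h hh => ae_of_all _ fun ω => ?_) (integrable_const _)
    (ae_of_all _ fun ω => hY.tendsto_sum_cellDrift hf' hf'' (hτ.nonneg ω) ω)
  have cell (i : ℕ) (hi : i ∈ Finset.range (gridCount h (τ ω))) :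
      ‖cellDrift δ f' f'' h (Y (i * h) ω)‖ ≤ h * |M| := by
    have hmem := hτ.mem_Icc ω (i * h) ⟨mul_nonneg i.cast_nonneg hh.1.le,
      (lt_gridCount_iff hh.1 (hτ.nonneg ω)).1 (Finset.mem_range.1 hi)⟩
    exact (hM h ⟨hh.1.le, hh.2.le⟩ _ hmem).trans (by gcongr; exacts [hh.1.le, le_abs_self M])
  calc _ ≤ ∑ _i ∈ Finset.range (gridCount h (τ ω)), h * |M| := norm_sum_le_of_le _ cell
    _ = gridCount h (τ ω) * h * |M| := by simp [mul_assoc]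
    _ ≤ (T + 1) * |M| := by
        gcongr
        linarith [gridCount_mul_le (h := h) (hτ.nonneg ω), hτ.le ω, hh.2]

lemma integrable_intervalIntegral_comp (hY : IsBESQ μ ℱ δ y Y) (hτ : IsConfinedTime ℱ Y a b T τ)
    {φ : ℝ → ℝ} (hφ : Continuous φ) :
    Integrable (fun ω => ∫ u in (0 : ℝ)..τ ω, φ (Y u ω)) μ := by
  obtain ⟨M, hM⟩ := (isCompact_Icc (a := a) (b := b)).exists_bound_of_continuousOn
    hφ.continuousOn
  have hcont (ω : Ω) : Continuous fun u => φ (Y u ω) := hφ.comp (hY.cont ω)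
  have hmeas : Measurable fun ω => ∫ u in (0 : ℝ)..τ ω, φ (Y u ω) := by
    have hprim (t : ℝ) : Measurable fun ω => ∫ u in (0 : ℝ)..t, φ (Y u ω) := by
      have hjoint := (hφ.measurable.comp (measurable_uncurry_of_continuous_of_measurable hY.cont
        hY.measurable)).stronglyMeasurable
      simp only [intervalIntegral]
      exact (hjoint.integral_prod_left'.sub hjoint.integral_prod_left').measurable
    exact (measurable_uncurry_of_continuous_of_measurable (fun ω =>
      intervalIntegral.continuous_primitive (fun _ _ => (hcont ω).intervalIntegrable _ _) 0)
      hprim).comp (hτ.isOptionalTime.measurable.prodMk measurable_id)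
  refine .of_bound hmeas.aestronglyMeasurable (|M| * T) (ae_of_all _ fun ω => ?_)
  refine (intervalIntegral.norm_integral_le_of_norm_le_const (C := |M|) fun u hu => ?_).trans ?_
  · rw [uIoc_of_le (hτ.nonneg ω)] at hu
    exact (hM _ (hτ.mem_Icc ω u (Ioc_subset_Icc_self hu))).trans (le_abs_self M)
  · rw [sub_zero, abs_of_nonneg (hτ.nonneg ω)]
    gcongr
    exact hτ.le ω

/-- The increment of `Y` over the cell of the grid of mesh `h` that contains `τ`. -/
noncomputable def lastIncrement (Y : ℝ → Ω → ℝ) (τ : Ω → ℝ) (h : ℝ) (ω : Ω) : ℝ :=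
  gridIncrement Y h ⌊τ ω / h⌋₊ ω

lemma measurable_lastIncrement {μ : Measure Ω} (hY : IsBESQ μ ℱ δ y Y) (hτ : Measurable τ)
    (h : ℝ) : Measurable (lastIncrement Y τ h) :=
  (hY.measurable_eval_gridCount hτ h).sub <| hY.measurable_eval <|
    (measurable_from_nat.comp (Nat.measurable_floor.comp (hτ.div_const h))).mul_const h

lemma min_mul_lastIncrement_sq_le {μ : Measure Ω} (hY : IsBESQ μ ℱ δ y Y)
    (hτ : IsConfinedTime ℱ Y a b T τ) (h : ℝ) (ω : Ω) :
    |min 1 |lastIncrement Y τ h ω| * lastIncrement Y τ h ω ^ 2|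
      ≤ (1 + b ^ 2) * (1 + Y (gridCount h (τ ω) * h) ω ^ 2) := by
  have hX := hY.nonneg (gridCount h (τ ω) * h) ω
  have hZ := hY.nonneg (⌊τ ω / h⌋₊ * h) ω
  have hZb := (hτ.mem_Icc ω _ (floor_div_mul_mem_Icc (h := h) (hτ.nonneg ω))).2
  rw [abs_of_nonneg (by positivity)]
  refine (mul_le_of_le_one_left (sq_nonneg _) (min_le_left _ _)).trans ?_
  change (Y (gridCount h (τ ω) * h) ω - Y (⌊τ ω / h⌋₊ * h) ω) ^ 2 ≤ _
  nlinarith [mul_nonneg hX hZ, mul_nonneg (sq_nonneg b) (sq_nonneg (Y (gridCount h (τ ω) * h) ω))]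

lemma integrable_lastIncrement (hY : IsBESQ μ ℱ δ y Y) (hτ : IsConfinedTime ℱ Y a b T τ) {h : ℝ}
    (hh : 0 < h) :
    Integrable (fun ω => min 1 |lastIncrement Y τ h ω| * lastIncrement Y τ h ω ^ 2) μ := by
  have hmeas := hY.measurable_lastIncrement hτ.isOptionalTime.measurable h
  exact (((integrable_const 1).add (hY.integrable_sq_eval_gridCount hτ.isOptionalTime.measurable
    hτ.le hh)).const_mul (1 + b ^ 2)).mono'
    ((measurable_const.min hmeas.abs).mul (hmeas.pow_const 2)).aestronglyMeasurable
    (ae_of_all _ (hY.min_mul_lastIncrement_sq_le hτ h))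

lemma tendsto_lastIncrement {μ : Measure Ω} (hY : IsBESQ μ ℱ δ y Y) {ω : Ω} (hτ : 0 ≤ τ ω) :
    Tendsto (fun h => lastIncrement Y τ h ω) (𝓝[>] 0) (𝓝 0) := by
  have hleft : Tendsto (fun h => (⌊τ ω / h⌋₊ : ℝ) * h) (𝓝[>] 0) (𝓝 (τ ω)) := by
    have hsub := (tendsto_gridCount_mul hτ).sub (tendsto_nhdsWithin_of_tendsto_nhds tendsto_id)
    simpa [gridCount, add_one_mul] using hsub
  simpa [lastIncrement, gridIncrement, gridCount] using
    (hY.tendsto_eval_gridCount (ω := ω) hτ).sub (((hY.cont ω).tendsto _).comp hleft)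

lemma tendsto_integral_lastIncrement (hY : IsBESQ μ ℱ δ y Y) (hδ : 0 ≤ δ)
    (hτ : IsConfinedTime ℱ Y a b T τ) :
    Tendsto (fun h => ∫ ω, min 1 |lastIncrement Y τ h ω| * lastIncrement Y τ h ω ^ 2 ∂μ)
      (𝓝[>] 0) (𝓝 0) := by
  have hmeas := hY.measurable_lastIncrement hτ.isOptionalTime.measurable
  suffices key : Tendsto
      (fun h => ∫ ω, min 1 |lastIncrement Y τ h ω| * lastIncrement Y τ h ω ^ 2 ∂μ)
      (𝓝[>] 0) (𝓝 (∫ _, 0 ∂μ)) by simpa only [integral_zero] using key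
  refine hY.tendsto_integral_of_abs_le_one_add_sq hδ hτ.isOptionalTime hτ.nonneg hτ.le
    (b := b + 1) (c := 1 + b ^ 2)
    (fun ω => (hτ.eval_mem_Icc ω).2.trans_lt (lt_add_one b)) (by positivity)
    (fun h => (measurable_const.min (hmeas h).abs).mul ((hmeas h).pow_const 2))
    (hY.min_mul_lastIncrement_sq_le hτ) fun ω => ?_
  have hlim := hY.tendsto_lastIncrement (hτ.nonneg ω)
  simpa using (tendsto_const_nhds.min hlim.abs).mul (hlim.pow 2)

lemma sum_min_mul_sq_le (hτ : IsConfinedTime ℱ Y a b T τ) {h : ℝ} (hh : 0 < h) (ω : Ω) :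
    ∑ i ∈ Finset.range ⌊τ ω / h⌋₊, min 1 |gridIncrement Y h i ω| * gridIncrement Y h i ω ^ 2
      ≤ gridOscillation Y T h ω * gridQuadVar Y τ T h ω := by
  have hsub : Finset.range ⌊τ ω / h⌋₊ ⊆ Finset.range (gridCount h T) :=
    Finset.range_mono ((Nat.le_succ _).trans (gridCount_mono hh (hτ.le ω)))
  have hcell (i : ℕ) (hi : i ∈ Finset.range ⌊τ ω / h⌋₊) : (i + 1 : ℕ) * h ≤ τ ω :=
    (lt_gridCount_iff hh (hτ.nonneg ω)).1 (Nat.succ_lt_succ (Finset.mem_range.1 hi))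
  rw [gridQuadVar, Finset.mul_sum]
  refine (Finset.sum_le_sum fun i hi => ?_).trans (Finset.sum_le_sum_of_subset_of_nonneg hsub
    fun i _ _ => mul_nonneg (gridOscillation_nonneg Y T h ω)
      (indicator_nonneg (fun _ _ => sq_nonneg _) _))
  rw [indicator_of_mem (s := {ω | (i + 1 : ℕ) * h ≤ τ ω}) (hcell i hi)]
  exact mul_le_mul_of_nonneg_right (le_gridOscillation Y (Finset.mem_range.1 (hsub hi)) ω)
    (sq_nonneg _)

lemma abs_gridRemainder_le {μ : Measure Ω} (hY : IsBESQ μ ℱ δ y Y) {C : ℝ} (hC : 0 ≤ C)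
    (hrem : ∀ x ∈ Icc a b, ∀ z, 0 ≤ z → |f z - f x - (f' x * (z - x) + f'' x / 2 * (z - x) ^ 2)|
      ≤ C * (min 1 |z - x| * (z - x) ^ 2))
    (hτ : IsConfinedTime ℱ Y a b T τ) {h : ℝ} (hh : 0 < h) (ω : Ω) :
    |f (Y (gridCount h (τ ω) * h) ω) - f y
        - ∑ i ∈ Finset.range (gridCount h (τ ω)), gridTaylor f' f'' Y h i ω|
      ≤ C * (gridOscillation Y T h ω * gridQuadVar Y τ T h ω
        + min 1 |lastIncrement Y τ h ω| * lastIncrement Y τ h ω ^ 2) := by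
  have telescope := Finset.sum_range_sub (fun i : ℕ => f (Y (i * h) ω)) (gridCount h (τ ω))
  rw [Nat.cast_zero, zero_mul, hY.init] at telescope
  rw [← telescope, ← Finset.sum_sub_distrib]
  have cell (i : ℕ) (hi : i ∈ Finset.range (gridCount h (τ ω))) :
      |f (Y ((i + 1 : ℕ) * h) ω) - f (Y (i * h) ω) - gridTaylor f' f'' Y h i ω|
        ≤ C * (min 1 |gridIncrement Y h i ω| * gridIncrement Y h i ω ^ 2) :=
    hrem _ (hτ.mem_Icc ω _ ⟨by positivity,
      (lt_gridCount_iff hh (hτ.nonneg ω)).1 (Finset.mem_range.1 hi)⟩) _ (hY.nonneg _ ω)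
  refine (Finset.abs_sum_le_sum_abs _ _).trans ((Finset.sum_le_sum cell).trans ?_)
  rw [← Finset.mul_sum, gridCount, Finset.sum_range_succ]
  exact mul_le_mul_of_nonneg_left (add_le_add_left (sum_min_mul_sq_le hτ hh ω) _) hC

lemma tendsto_integral_gridRemainder (hY : IsBESQ μ ℱ δ y Y) (hδ : 0 ≤ δ)
    (hτ : IsConfinedTime ℱ Y a b T τ) (hf : HasTaylorOn f f' f'' (Icc a b)) :
    Tendsto (fun h => ∫ ω, (f (Y (gridCount h (τ ω) * h) ω) - f y
      - ∑ i ∈ Finset.range (gridCount h (τ ω)), gridTaylor f' f'' Y h i ω) ∂μ) (𝓝[>] 0) (𝓝 0) := by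
  obtain ⟨C, hC, hrem⟩ := hf.exists_remainder_le
  have hyK : 0 ≤ max b 0 := le_max_right _ _
  have hYb (ω : Ω) (t : ℝ) (ht : t ∈ Icc 0 (τ ω)) : Y t ω ≤ max b 0 :=
    (hτ.mem_Icc ω t ht).2.trans (le_max_left _ _)
  have hT : 0 ≤ T := by
    obtain ⟨ω₀⟩ := nonempty_of_isProbabilityMeasure μ
    exact (hτ.nonneg ω₀).trans (hτ.le ω₀)
  have hcells : Tendsto (fun h => ∫ ω, gridOscillation Y T h ω * gridQuadVar Y τ T h ω ∂μ)
      (𝓝[>] 0) (𝓝 0) := by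
    have pos : ∀ᶠ h : ℝ in 𝓝[>] 0, h ∈ Ioi 0 := self_mem_nhdsWithin
    have mesh : ∀ᶠ h : ℝ in 𝓝[>] 0, h ∈ Ioo 0 1 := Ioo_mem_nhdsGT one_pos
    exact tendsto_integral_mul_zero (hY.measurable_gridOscillation T) (gridOscillation_nonneg Y T)
      (gridOscillation_le_one Y T) (hY.tendsto_gridOscillation hT)
      (pos.mono fun h hh => hY.memLp_gridQuadVar hτ.isOptionalTime hYb hh)
      (gridQuadVar_nonneg Y τ T) (mesh.mono fun h hh =>
        hY.integral_gridQuadVar_sq_le hδ hτ.isOptionalTime hyK hYb hT hh.1 hh.2.le)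
  have hbound := (hcells.add (hY.tendsto_integral_lastIncrement hδ hτ)).const_mul C
  rw [add_zero, mul_zero] at hbound
  refine squeeze_zero_norm' ?_ hbound
  filter_upwards [self_mem_nhdsWithin] with h hh
  have hcells_int : Integrable (fun ω => gridOscillation Y T h ω * gridQuadVar Y τ T h ω) μ :=
    ((hY.memLp_gridQuadVar hτ.isOptionalTime hYb hh).integrable one_le_two).bdd_mul
      (hY.measurable_gridOscillation T h).aestronglyMeasurable (ae_of_all _ fun ω =>
        (Real.norm_of_nonneg (gridOscillation_nonneg Y T h ω)).trans_le
          (gridOscillation_le_one Y T h ω))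
  have hlast_int := hY.integrable_lastIncrement hτ hh
  rw [← integral_add hcells_int hlast_int, ← integral_const_mul]
  exact norm_integral_le_of_norm_le ((hcells_int.add hlast_int).const_mul C)
    (ae_of_all _ (hY.abs_gridRemainder_le hC hrem hτ hh))

theorem dynkin (hY : IsBESQ μ ℱ δ y Y) (hδ : 0 ≤ δ) (hτ : IsConfinedTime ℱ Y a b T τ)
    (hf : HasTaylorOn f f' f'' (Icc a b)) :
    ∫ ω, f (Y (τ ω) ω) ∂μ
      = f y + ∫ ω, (∫ u in (0 : ℝ)..τ ω, besqGenerator δ f' f'' (Y u ω)) ∂μ := by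
  obtain ⟨ω₀⟩ := nonempty_of_isProbabilityMeasure μ
  obtain ⟨c, hc, hfc⟩ := hf.exists_abs_le ⟨_, hτ.eval_mem_Icc ω₀⟩
  have hX (h : ℝ) := hY.measurable_eval_gridCount hτ.isOptionalTime.measurable h
  have hfX (h : ℝ) : Measurable fun ω => f (Y (gridCount h (τ ω) * h) ω) :=
    hf.continuous.measurable.comp (hX h)
  have hend : Tendsto (fun h => ∫ ω, f (Y (gridCount h (τ ω) * h) ω) ∂μ) (𝓝[>] 0)
      (𝓝 (∫ ω, f (Y (τ ω) ω) ∂μ)) :=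
    hY.tendsto_integral_of_abs_le_one_add_sq hδ hτ.isOptionalTime hτ.nonneg hτ.le
      (fun ω => (hτ.eval_mem_Icc ω).2.trans_lt (lt_add_one b)) hc hfX
      (fun h ω => hfc _ (hY.nonneg _ ω))
      fun ω => (hf.continuous.tendsto _).comp (hY.tendsto_eval_gridCount (hτ.nonneg ω))
  have hlim := ((hY.tendsto_integral_sum_cellDrift hτ hf.continuous_fst hf.continuous_snd).add
    (hY.tendsto_integral_gridRemainder hδ hτ hf)).const_add (f y)
  rw [add_zero] at hlim
  refine tendsto_nhds_unique (hend.congr' ?_) hlim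
  filter_upwards [self_mem_nhdsWithin] with h hh
  obtain ⟨⟨hint, -⟩, hmean⟩ :=
    hY.integral_sum_gridTaylor hτ hf.continuous_fst hf.continuous_snd hh
  have hfint : Integrable (fun ω => f (Y (gridCount h (τ ω) * h) ω)) μ :=
    (((integrable_const 1).add (hY.integrable_sq_eval_gridCount hτ.isOptionalTime.measurable
      hτ.le hh)).const_mul c).mono' (hfX h).aestronglyMeasurable
      (ae_of_all _ fun ω => hfc _ (hY.nonneg _ ω))
  rw [← hmean, integral_sub (f := fun ω => f (Y (gridCount h (τ ω) * h) ω) - f y)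
    (hfint.sub (integrable_const _)) hint, integral_sub hfint (integrable_const _), integral_const,
    probReal_univ, one_smul]
  ring

end Dynkin

end IsBESQ

section TestFunctions

lemma isBigO_one_add_rpow_sub (p : ℝ) :
    (fun u : ℝ => (1 + u) ^ p - (1 + p * u + p * (p - 1) / 2 * u ^ 2))
      =O[𝓝 0] fun u => |u| ^ 3 := by
  have hchoose : Ring.choose p 2 = p * (p - 1) / 2 := by
    simp [Ring.choose_eq_smul, descPochhammer_succ_right, Polynomial.smeval_mul,
      Polynomial.smeval_sub, Polynomial.smeval_X, Polynomial.smeval_one]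
    ring
  simpa [FormalMultilinearSeries.partialSum, Finset.sum_range_succ, binomialSeries, hchoose,
    FormalMultilinearSeries.coeff_ofScalars, mul_comm] using
    (Real.one_add_rpow_hasFPowerSeriesAt_zero (a := p)).isBigO_sub_partialSum_pow 3

lemma abs_one_add_rpow_sub_le {p u : ℝ} (hp0 : 0 ≤ p) (hp2 : p ≤ 2) (hu : -1 ≤ u) :
    |(1 + u) ^ p - (1 + p * u + p * (p - 1) / 2 * u ^ 2)| ≤ 5 * (1 + u ^ 2) := by
  have hu0 : 0 ≤ 1 + u := by linarith
  have hpow : (1 + u) ^ p ≤ 1 + (1 + u) ^ 2 := by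
    rcases le_total (1 + u) 1 with h | h
    · linarith [Real.rpow_le_one hu0 h hp0, sq_nonneg (1 + u)]
    · have := Real.rpow_le_rpow_of_exponent_le h hp2
      rw [Real.rpow_two] at this
      linarith
  have hpow0 := Real.rpow_nonneg hu0 p
  have hpp : |p * (p - 1) / 2| ≤ 1 := by rw [abs_le]; constructor <;> nlinarith
  have hlin : |p * u| ≤ 1 + u ^ 2 := by
    rw [abs_mul, abs_of_nonneg hp0, ← sq_abs u]
    nlinarith [abs_nonneg u, sq_nonneg (|u| - 1)]
  have hquad : |p * (p - 1) / 2 * u ^ 2| ≤ u ^ 2 := by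
    rw [abs_mul, abs_of_nonneg (sq_nonneg u)]
    exact mul_le_of_le_one_left (sq_nonneg u) hpp
  rw [abs_le] at hlin hquad ⊢
  constructor <;> nlinarith [sq_nonneg (u - 1)]

lemma exists_abs_one_add_rpow_sub_le {p : ℝ} (hp0 : 0 ≤ p) (hp2 : p ≤ 2) :
    ∃ C, 0 ≤ C ∧ ∀ u, -1 ≤ u →
      |(1 + u) ^ p - (1 + p * u + p * (p - 1) / 2 * u ^ 2)| ≤ C * (min 1 |u| * u ^ 2) := by
  obtain ⟨C, hC, hnear⟩ := (isBigO_one_add_rpow_sub p).exists_nonneg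
  obtain ⟨r, hr, hball⟩ := Metric.eventually_nhds_iff.1 hnear.bound
  have hs : 0 < min r 1 := lt_min hr one_pos
  set s := min r 1
  refine ⟨max C (10 / s ^ 3), hC.trans (le_max_left _ _), fun u hu => ?_⟩
  rcases lt_or_ge |u| s with hus | hus
  · have key := hball (y := u) (by simpa using hus.trans_le (min_le_left r 1))
    rw [Real.norm_eq_abs, Real.norm_eq_abs, abs_of_nonneg (by positivity : 0 ≤ |u| ^ 3)] at key
    calc _ ≤ C * |u| ^ 3 := key
      _ = C * (min 1 |u| * u ^ 2) := by
          rw [min_eq_right (hus.trans_le (min_le_right r 1)).le, ← sq_abs u]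
          ring
      _ ≤ _ := by gcongr; exact le_max_left _ _
  · have hs1 : s ≤ 1 := min_le_right r 1
    calc _ ≤ 5 * (1 + u ^ 2) := abs_one_add_rpow_sub_le hp0 hp2 hu
      _ ≤ 10 / s ^ 3 * (s * u ^ 2) := by
          have hsu : s ^ 2 ≤ u ^ 2 := by rw [← sq_abs u]; gcongr
          have hsq : s ^ 2 * u ^ 2 ≤ u ^ 2 :=
            mul_le_of_le_one_left (sq_nonneg u) (pow_le_one₀ hs.le hs1)
          rw [show 10 / s ^ 3 * (s * u ^ 2) = 10 * u ^ 2 / s ^ 2 by field_simp,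
            le_div_iff₀ (by positivity)]
          linarith
      _ ≤ _ := by
          gcongr
          exacts [le_max_right _ _, le_min hs1 hus]

lemma min_mul_div_sq_le {ε x d : ℝ} (hε : 0 < ε) (hx : ε ≤ x) :
    min 1 |d / x| * (d / x) ^ 2 ≤ (1 + 1 / ε) / ε ^ 2 * (min 1 |d| * d ^ 2) := by
  have hx0 : 0 < x := hε.trans_le hx
  have hmin : min 1 |d / x| ≤ (1 + 1 / ε) * min 1 |d| := by
    have hd : |d / x| ≤ 1 / ε * |d| := by
      rw [abs_div, abs_of_pos hx0, one_div_mul_eq_div]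
      gcongr
    have hε' : 0 < 1 / ε := by positivity
    rcases min_cases 1 |d| with ⟨h, -⟩ | ⟨h, -⟩ <;> rw [h]
    · exact (min_le_left _ _).trans (by linarith)
    · exact (min_le_right _ _).trans (by linarith [abs_nonneg d])
  calc min 1 |d / x| * (d / x) ^ 2 ≤ (1 + 1 / ε) * min 1 |d| * (d ^ 2 / ε ^ 2) := by
        rw [div_pow]
        gcongr
    _ = _ := by ring

lemma hasTaylorOn_rpow {p ε K : ℝ} (hp0 : 0 ≤ p) (hp2 : p ≤ 2) (hε : 0 < ε) :
    HasTaylorOn (· ^ p) (fun x => p * max x ε ^ (p - 1)) (fun x => p * (p - 1) * max x ε ^ (p - 2))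
      (Icc ε K) := by
  have hmax (q : ℝ) : Continuous fun x : ℝ => max x ε ^ q :=
    (continuous_id.max continuous_const).rpow_const fun x =>
      .inl (hε.trans_le (le_max_right x ε)).ne'
  obtain ⟨C, hC, hrem⟩ := exists_abs_one_add_rpow_sub_le hp0 hp2
  refine ⟨Real.continuous_rpow_const hp0, (hmax _).const_mul _, (hmax _).const_mul _,
    |K| ^ p * C * ((1 + 1 / ε) / ε ^ 2), by positivity, fun x hx z hz => ?_⟩
  have hx0 : 0 < x := hε.trans_le hx.1
  set u := (z - x) / x with hu
  have hu1 : -1 ≤ u := by rw [hu, le_div_iff₀ hx0]; linarith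
  have hxu : z - x = x * u := by rw [hu]; field_simp
  have hz' : z = x * (1 + u) := by linarith
  have hscale : z ^ p - x ^ p - (p * max x ε ^ (p - 1) * (z - x)
      + p * (p - 1) * max x ε ^ (p - 2) / 2 * (z - x) ^ 2)
      = x ^ p * ((1 + u) ^ p - (1 + p * u + p * (p - 1) / 2 * u ^ 2)) := by
    rw [hxu, hz', Real.mul_rpow hx0.le (by linarith), max_eq_left hx.1, Real.rpow_sub_one hx0.ne',
      Real.rpow_sub hx0, Real.rpow_two]
    field_simp
    ring
  have hxp : x ^ p ≤ |K| ^ p := Real.rpow_le_rpow hx0.le (hx.2.trans (le_abs_self K)) hp0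
  calc _ = x ^ p * |(1 + u) ^ p - (1 + p * u + p * (p - 1) / 2 * u ^ 2)| := by
        rw [hscale, abs_mul, abs_of_nonneg (by positivity)]
    _ ≤ |K| ^ p * (C * ((1 + 1 / ε) / ε ^ 2 * (min 1 |z - x| * (z - x) ^ 2))) := by
        gcongr
        exact (hrem u hu1).trans (mul_le_mul_of_nonneg_left (min_mul_div_sq_le hε hx.1) hC)
    _ = _ := by ring

lemma hasTaylorOn_sub_sq (c : ℝ) (s : Set ℝ) :
    HasTaylorOn (fun x => (x - c) ^ 2) (fun x => 2 * (x - c)) (fun _ => 2) s := by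
  refine ⟨by fun_prop, by fun_prop, by fun_prop, 0, le_rfl, fun x _ z _ => le_of_eq ?_⟩
  rw [zero_mul, abs_eq_zero]
  ring

lemma hasTaylorOn_id (s : Set ℝ) : HasTaylorOn id (fun _ => 1) (fun _ => 0) s := by
  refine ⟨continuous_id, continuous_const, continuous_const, 0, le_rfl, fun x _ z _ => le_of_eq ?_⟩
  rw [zero_mul, abs_eq_zero, id, id]
  ring

end TestFunctions

section ExitTime

variable {Ω : Type*} {Y : ℝ → Ω → ℝ} {S : Set ℝ} {σ : Ω → ℝ} {r : ℝ} {ω : Ω}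

/-- The first time after `σ` at which `Y` is outside `S`, capped at `σ + r`. -/
noncomputable def exitTime (Y : ℝ → Ω → ℝ) (S : Set ℝ) (σ : Ω → ℝ) (r : ℝ) (ω : Ω) : ℝ :=
  hittingBtwn Y Sᶜ (σ ω) (σ ω + r) ω

lemma exitTime_le (Y : ℝ → Ω → ℝ) (S : Set ℝ) (σ : Ω → ℝ) (r : ℝ) (ω : Ω) :
    exitTime Y S σ r ω ≤ σ ω + r :=
  hittingBtwn_le ω

lemma le_exitTime (Y : ℝ → Ω → ℝ) (S : Set ℝ) (σ : Ω → ℝ) (hr : 0 ≤ r) (ω : Ω) :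
    σ ω ≤ exitTime Y S σ r ω :=
  le_hittingBtwn (le_add_of_nonneg_right hr) ω

lemma exitTime_eq_of_notMem (hr : 0 ≤ r) (hω : Y (σ ω) ω ∉ S) : exitTime Y S σ r ω = σ ω :=
  (hittingBtwn_le_of_mem le_rfl (le_add_of_nonneg_right hr) hω).antisymm (le_exitTime Y S σ hr ω)

lemma mem_of_mem_Icc_exitTime (hY : Continuous fun t => Y t ω) (hS : IsClosed S)
    (hω : Y (σ ω) ω ∈ S) {t : ℝ} (ht : t ∈ Icc (σ ω) (exitTime Y S σ r ω)) : Y t ω ∈ S := by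
  have before {u : ℝ} (hu : u ∈ Ico (σ ω) (exitTime Y S σ r ω)) : Y u ω ∈ S :=
    not_not.1 (notMem_of_lt_hittingBtwn hu.2 hu.1)
  rcases (ht.1.trans ht.2).eq_or_lt with heq | hlt
  · rwa [← le_antisymm ht.1 (ht.2.trans heq.ge)]
  · rw [← closure_Ico hlt.ne] at ht
    exact closure_minimal (fun _ => before) (hS.preimage hY) ht

lemma eval_exitTime_mem_closure_compl (hY : Continuous fun t => Y t ω)
    (hω : exitTime Y S σ r ω < σ ω + r) : Y (exitTime Y S σ r ω) ω ∈ closure Sᶜ := by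
  have hfreq : ∃ᶠ t in 𝓝 (exitTime Y S σ r ω), Y t ω ∈ Sᶜ := by
    rw [Metric.nhds_basis_ball.frequently_iff]
    intro η hη
    have hlt : exitTime Y S σ r ω < min (exitTime Y S σ r ω + η) (σ ω + r) :=
      lt_min (lt_add_of_pos_right _ hη) hω
    obtain ⟨j, hj, hjS⟩ := (hittingBtwn_lt_iff _ (min_le_right _ _)).1 hlt
    have hle : exitTime Y S σ r ω ≤ j :=
      hittingBtwn_le_of_mem hj.1 (hj.2.le.trans (min_le_right _ _)) hjS
    refine ⟨j, ?_, hjS⟩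
    rw [Metric.mem_ball, Real.dist_eq, abs_of_nonneg (sub_nonneg.2 hle)]
    linarith [hj.2.trans_le (min_le_left _ _)]
  exact mem_closure_of_frequently_of_tendsto hfreq (hY.tendsto _)

lemma eval_exitTime_Icc {a b : ℝ} (hr : 0 ≤ r) (hY : Continuous fun t => Y t ω)
    (hσ : Y (σ ω) ω ∈ Icc a b) (hω : exitTime Y (Icc a b) σ r ω < σ ω + r) :
    Y (exitTime Y (Icc a b) σ r ω) ω = a ∨ Y (exitTime Y (Icc a b) σ r ω) ω = b := by
  have hmem := mem_of_mem_Icc_exitTime hY isClosed_Icc hσ ⟨le_exitTime Y _ σ hr ω, le_rfl⟩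
  have hfrontier := eval_exitTime_mem_closure_compl hY hω
  rw [closure_compl, interior_Icc, mem_compl_iff, mem_Ioo, not_and_or, not_lt, not_lt] at hfrontier
  exact hfrontier.imp (fun h => h.antisymm hmem.1) hmem.2.antisymm

lemma exitTime_lt_iff (hY : Continuous fun t => Y t ω) (hS : IsClosed S) {t : ℝ} :
    exitTime Y S σ r ω < t ↔ σ ω < t - r ∨ ∃ q : ℚ, σ ω < q ∧ q < t ∧ Y q ω ∉ S := by
  rw [lt_sub_iff_add_lt]
  constructor
  · intro h
    refine or_iff_not_imp_left.2 fun ht => ?_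
    obtain ⟨j, hj, hjS⟩ := (hittingBtwn_lt_iff t (not_lt.1 ht)).1 h
    have hopen : ∀ᶠ u in 𝓝[>] j, Y u ω ∈ Sᶜ :=
      nhdsWithin_le_nhds ((hS.isOpen_compl.preimage hY).mem_nhds hjS)
    obtain ⟨v, hjv, hv⟩ := mem_nhdsGT_iff_exists_Ioo_subset.1 hopen
    obtain ⟨q, hjq, hq⟩ := exists_rat_btwn (lt_min hjv hj.2)
    exact ⟨q, hj.1.trans_lt hjq, hq.trans_le (min_le_right _ _),
      hv ⟨hjq, hq.trans_le (min_le_left _ _)⟩⟩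
  · rintro (h | ⟨q, hσq, hqt, hqS⟩)
    · exact (exitTime_le Y S σ r ω).trans_lt h
    · rcases le_total (q : ℝ) (σ ω + r) with hqr | hqr
      · exact (hittingBtwn_le_of_mem hσq.le hqr hqS).trans_lt hqt
      · exact ((exitTime_le Y S σ r ω).trans hqr).trans_lt hqt

variable {m : MeasurableSpace Ω} {ℱ : Filtration ℝ m}

lemma IsOptionalTime.exitTime (hσ : IsOptionalTime ℱ σ) (hYm : Adapted ℱ Y)
    (hY : ∀ ω, Continuous fun t => Y t ω) (hS : IsClosed S) (hr : 0 ≤ r) :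
    IsOptionalTime ℱ (exitTime Y S σ r) := by
  intro t
  have hunion : {ω | _root_.exitTime Y S σ r ω < t}
      = {ω | σ ω < t - r} ∪ ⋃ (q : ℚ) (_ : (q : ℝ) < t), {ω | σ ω < q} ∩ (Y q ⁻¹' S)ᶜ := by
    ext ω
    simp [exitTime_lt_iff (hY ω) hS]
  rw [hunion]
  refine (ℱ.mono (sub_le_self t hr) _ (hσ _)).union (.iUnion fun q => .iUnion fun hq => ?_)
  exact ℱ.mono hq.le _ ((hσ q).inter (hYm q hS.measurableSet).compl)

end ExitTime

namespace IsBESQ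

section ConfinedTime

variable {Ω : Type*} {m : MeasurableSpace Ω} {μ : Measure Ω} {ℱ : Filtration ℝ m} {δ y : ℝ}
  {Y : ℝ → Ω → ℝ} {a b : ℝ}

lemma isConfinedTime_zero (hY : IsBESQ μ ℱ δ y Y) (hy : y ∈ Icc a b) :
    IsConfinedTime ℱ Y a b 0 (fun _ => 0) where
  isOptionalTime _ := .const _
  nonneg _ := le_rfl
  le _ := le_rfl
  mem_Icc ω t ht := by rwa [le_antisymm ht.2 ht.1, hY.init]

lemma isConfinedTime_exitTime (hY : IsBESQ μ ℱ δ y Y) {a' b' c d T r : ℝ} {τ : Ω → ℝ}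
    (hτ : IsConfinedTime ℱ Y a b T τ) (hr : 0 ≤ r) (hab : Icc a b ⊆ Icc a' b')
    (hcd : Icc c d ⊆ Icc a' b') :
    IsConfinedTime ℱ Y a' b' (T + r) (exitTime Y (Icc c d) τ r) where
  isOptionalTime := hτ.isOptionalTime.exitTime hY.adapted hY.cont isClosed_Icc hr
  nonneg ω := (hτ.nonneg ω).trans (le_exitTime _ _ _ hr ω)
  le ω := (exitTime_le _ _ _ _ ω).trans (add_le_add_left (hτ.le ω) r)
  mem_Icc ω t ht := by
    rcases le_total t (τ ω) with htτ | htτ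
    · exact hab (hτ.mem_Icc ω t ⟨ht.1, htτ⟩)
    · by_cases hω : Y (τ ω) ω ∈ Icc c d
      · exact hcd (mem_of_mem_Icc_exitTime (hY.cont ω) isClosed_Icc hω ⟨htτ, ht.2⟩)
      · rw [exitTime_eq_of_notMem hr hω] at ht
        exact hab (hτ.mem_Icc ω t ht)

end ConfinedTime

section ExitProbabilities

variable {Ω : Type*} {m : MeasurableSpace Ω} {μ : Measure Ω} [IsProbabilityMeasure μ]
  {ℱ : Filtration ℝ m} {δ y : ℝ} {Y : ℝ → Ω → ℝ} {τ ρ : Ω → ℝ} {ε K a b T : ℝ}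

lemma integrable_comp_eval (hY : IsBESQ μ ℱ δ y Y) (hτ : IsConfinedTime ℱ Y a b T τ) {φ : ℝ → ℝ}
    (hφ : Continuous φ) : Integrable (fun ω => φ (Y (τ ω) ω)) μ := by
  obtain ⟨M, hM⟩ := (isCompact_Icc (a := a) (b := b)).exists_bound_of_continuousOn
    hφ.continuousOn
  exact .of_bound (hφ.measurable.comp
    (hY.measurable_eval hτ.isOptionalTime.measurable)).aestronglyMeasurable M
    (ae_of_all _ fun ω => hM _ (hτ.eval_mem_Icc ω))

lemma intervalIntegral_sub_eq {μ : Measure Ω} (hY : IsBESQ μ ℱ δ y Y) {φ : ℝ → ℝ}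
    (hφ : Continuous φ) (ω : Ω) (s t : ℝ) :
    (∫ u in (0 : ℝ)..t, φ (Y u ω)) - ∫ u in (0 : ℝ)..s, φ (Y u ω) = ∫ u in s..t, φ (Y u ω) :=
  intervalIntegral.integral_interval_sub_left ((hφ.comp (hY.cont ω)).intervalIntegrable _ _)
    ((hφ.comp (hY.cont ω)).intervalIntegrable _ _)

lemma integrable_intervalIntegral_comp_of_confined (hY : IsBESQ μ ℱ δ y Y) {S : ℝ}
    (hτ : IsConfinedTime ℱ Y a b S τ) (hρ : IsConfinedTime ℱ Y a b T ρ) {φ : ℝ → ℝ}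
    (hφ : Continuous φ) : Integrable (fun ω => ∫ u in τ ω..ρ ω, φ (Y u ω)) μ :=
  ((hY.integrable_intervalIntegral_comp hρ hφ).sub
    (hY.integrable_intervalIntegral_comp hτ hφ)).congr
      (ae_of_all _ fun _ => hY.intervalIntegral_sub_eq hφ _ _ _)

lemma dynkin_sub (hY : IsBESQ μ ℱ δ y Y) (hδ : 0 ≤ δ) {S : ℝ} (hτ : IsConfinedTime ℱ Y a b S τ)
    (hρ : IsConfinedTime ℱ Y a b T ρ) {f f' f'' : ℝ → ℝ} (hf : HasTaylorOn f f' f'' (Icc a b)) :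
    ∫ ω, (f (Y (ρ ω) ω) - f (Y (τ ω) ω)) ∂μ
      = ∫ ω, (∫ u in τ ω..ρ ω, besqGenerator δ f' f'' (Y u ω)) ∂μ := by
  have hL := continuous_besqGenerator δ hf.continuous_fst hf.continuous_snd
  rw [integral_sub (hY.integrable_comp_eval hρ hf.continuous)
    (hY.integrable_comp_eval hτ hf.continuous), hY.dynkin hδ hρ hf, hY.dynkin hδ hτ hf,
    add_sub_add_left_eq_sub, ← integral_sub (hY.integrable_intervalIntegral_comp hρ hL)
      (hY.integrable_intervalIntegral_comp hτ hL)]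
  exact integral_congr_ae (ae_of_all _ fun _ => hY.intervalIntegral_sub_eq hL _ _ _)

lemma integral_eval_eq (hY : IsBESQ μ ℱ δ y Y) (hδ : 0 ≤ δ) (hτ : IsConfinedTime ℱ Y a b T τ) :
    ∫ ω, Y (τ ω) ω ∂μ = y + δ * ∫ ω, τ ω ∂μ := by
  simpa [besqGenerator, integral_const_mul, mul_comm] using
    hY.dynkin hδ hτ (hasTaylorOn_id (Icc a b))

lemma integral_rpow_eval_eq (hY : IsBESQ μ ℱ δ y Y) (hδ0 : 0 ≤ δ) (hδ2 : δ ≤ 2) (hε : 0 < ε)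
    (hτ : IsConfinedTime ℱ Y ε K T τ) :
    ∫ ω, Y (τ ω) ω ^ (1 - δ / 2) ∂μ = y ^ (1 - δ / 2) := by
  have hdynkin := hY.dynkin hδ0 hτ
    (hasTaylorOn_rpow (p := 1 - δ / 2) (by linarith) (by linarith) hε)
  have hharm (ω : Ω) : (∫ u in (0 : ℝ)..τ ω, besqGenerator δ
      (fun x => (1 - δ / 2) * max x ε ^ (1 - δ / 2 - 1))
      (fun x => (1 - δ / 2) * (1 - δ / 2 - 1) * max x ε ^ (1 - δ / 2 - 2)) (Y u ω)) = 0 := by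
    refine (intervalIntegral.integral_congr (g := fun _ => 0) fun u hu => ?_).trans (by simp)
    rw [uIcc_of_le (hτ.nonneg ω)] at hu
    have hx := (hτ.mem_Icc ω u hu).1
    have hx0 : 0 < Y u ω := hε.trans_le hx
    simp only [besqGenerator]
    rw [max_eq_left hx, show 1 - δ / 2 - 1 = 1 - δ / 2 - 2 + 1 by ring, Real.rpow_add_one hx0.ne']
    ring
  simp only [hharm, integral_zero, add_zero] at hdynkin
  exact hdynkin

lemma start_nonneg (hY : IsBESQ μ ℱ δ y Y) : 0 ≤ y := by
  obtain ⟨ω⟩ := nonempty_of_isProbabilityMeasure μ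
  exact hY.init ω ▸ hY.nonneg 0 ω

lemma measureReal_eq_horizon_le (hY : IsBESQ μ ℱ δ y Y) (hδ : 0 ≤ δ)
    (hτ : IsConfinedTime ℱ Y a b T τ) : δ * (T * μ.real {ω | τ ω = T}) ≤ b := by
  have hmeas := hτ.isOptionalTime.measurable
  have hτint : Integrable τ μ := .of_bound hmeas.aestronglyMeasurable T (ae_of_all _ fun ω => by
    rw [Real.norm_of_nonneg (hτ.nonneg ω)]; exact hτ.le ω)
  have hmarkov : T * μ.real {ω | τ ω = T} ≤ ∫ ω, τ ω ∂μ := by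
    have hset : {ω | T ≤ τ ω} = {ω | τ ω = T} := by
      ext ω
      exact (hτ.le ω).ge_iff_eq
    exact hset ▸ mul_meas_ge_le_integral_of_nonneg (ae_of_all _ hτ.nonneg) hτint T
  have hmean : ∫ ω, Y (τ ω) ω ∂μ ≤ b := by
    simpa using integral_mono (hY.integrable_comp_eval hτ continuous_id) (integrable_const b)
      fun ω => (hτ.eval_mem_Icc ω).2
  rw [hY.integral_eval_eq hδ hτ] at hmean
  linarith [mul_le_mul_of_nonneg_left hmarkov hδ, hY.start_nonneg]

lemma rpow_mul_measureReal_eval_eq_le (hY : IsBESQ μ ℱ δ y Y) (hδ0 : 0 ≤ δ) (hδ2 : δ ≤ 2)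
    (hε : 0 < ε) (hτ : IsConfinedTime ℱ Y ε K T τ) :
    K ^ (1 - δ / 2) * μ.real {ω | Y (τ ω) ω = K} ≤ y ^ (1 - δ / 2) := by
  have hmeas : MeasurableSet {ω | Y (τ ω) ω = K} :=
    hY.measurable_eval hτ.isOptionalTime.measurable (measurableSet_singleton K)
  have hint := hY.integrable_comp_eval hτ
    (Real.continuous_rpow_const (q := 1 - δ / 2) (by linarith))
  rw [← hY.integral_rpow_eval_eq hδ0 hδ2 hε hτ, mul_comm, ← smul_eq_mul,
    ← integral_indicator_const _ hmeas]
  refine integral_mono ((integrable_const _).indicator hmeas) hint fun ω => ?_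
  exact indicator_apply_le' (fun hω : Y (τ ω) ω = K => by rw [hω])
    fun _ => Real.rpow_nonneg (hY.nonneg _ _) _

lemma rpow_le_rpow_add_rpow_mul_measureReal (hY : IsBESQ μ ℱ δ y Y) (hδ0 : 0 ≤ δ) (hδ2 : δ ≤ 2)
    (hε : 0 < ε) (hτ : IsConfinedTime ℱ Y ε K T τ) :
    y ^ (1 - δ / 2) ≤ ε ^ (1 - δ / 2) + K ^ (1 - δ / 2) * μ.real {ω | Y (τ ω) ω ≠ ε} := by
  have hmeas : MeasurableSet {ω | Y (τ ω) ω ≠ ε} :=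
    (hY.measurable_eval hτ.isOptionalTime.measurable (measurableSet_singleton ε)).compl
  have hint := hY.integrable_comp_eval hτ
    (Real.continuous_rpow_const (q := 1 - δ / 2) (by linarith))
  have hind : Integrable ({ω | Y (τ ω) ω ≠ ε}.indicator fun _ => K ^ (1 - δ / 2)) μ :=
    (integrable_const _).indicator hmeas
  calc y ^ (1 - δ / 2) = ∫ ω, Y (τ ω) ω ^ (1 - δ / 2) ∂μ :=
        (hY.integral_rpow_eval_eq hδ0 hδ2 hε hτ).symm
    _ ≤ ∫ ω, (ε ^ (1 - δ / 2) + {ω | Y (τ ω) ω ≠ ε}.indicator (fun _ => K ^ (1 - δ / 2)) ω) ∂μ := by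
        refine integral_mono hint ((integrable_const _).add hind) fun ω => ?_
        have hω := hτ.eval_mem_Icc ω
        by_cases heq : Y (τ ω) ω = ε
        · simp [heq]
        · rw [indicator_of_mem (s := {ω | Y (τ ω) ω ≠ ε}) heq]
          exact (Real.rpow_le_rpow (hY.nonneg _ _) hω.2 (by linarith)).trans
            (le_add_of_nonneg_left (by positivity))
    _ = ε ^ (1 - δ / 2) + K ^ (1 - δ / 2) * μ.real {ω | Y (τ ω) ω ≠ ε} := by
        rw [integral_add (integrable_const _) hind, integral_indicator_const _ hmeas]
        simp [mul_comm]

end ExitProbabilities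

section HittingZero

variable {Ω : Type*} {m : MeasurableSpace Ω} {μ : Measure Ω} {ℱ : Filtration ℝ m} {δ y : ℝ}
  {Y : ℝ → Ω → ℝ} {ε K a b T : ℝ}

lemma isConfinedTime_exitTime_zero (hY : IsBESQ μ ℱ δ y Y) (hy : y ∈ Icc a b) (hT : 0 ≤ T) :
    IsConfinedTime ℱ Y a b T (exitTime Y (Icc a b) (fun _ => 0) T) := by
  simpa only [zero_add] using
    hY.isConfinedTime_exitTime (hY.isConfinedTime_zero hy) hT subset_rfl subset_rfl

lemma exitTime_zero_eq_or (hY : IsBESQ μ ℱ δ y Y) (hy : y ∈ Icc a b) (hT : 0 ≤ T) (ω : Ω) :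
    exitTime Y (Icc a b) (fun _ => 0) T ω = T ∨
      Y (exitTime Y (Icc a b) (fun _ => 0) T ω) ω = a ∨
      Y (exitTime Y (Icc a b) (fun _ => 0) T ω) ω = b := by
  refine ((hY.isConfinedTime_exitTime_zero hy hT).le ω).eq_or_lt.imp_right fun hlt => ?_
  exact eval_exitTime_Icc (σ := fun _ => 0) hT (hY.cont ω) (by rwa [hY.init])
    (by rwa [zero_add])

variable [IsProbabilityMeasure μ]

lemma measureReal_exitTime_zero_eq_le (hY : IsBESQ μ ℱ δ y Y) (hδ : 0 < δ) (hy : y ∈ Icc a b)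
    (hT : 0 < T) : μ.real {ω | exitTime Y (Icc a b) (fun _ => 0) T ω = T} ≤ b / (δ * T) := by
  rw [le_div_iff₀ (by positivity), mul_comm, mul_assoc]
  exact hY.measureReal_eq_horizon_le hδ.le (hY.isConfinedTime_exitTime_zero hy hT.le)

lemma measureReal_forall_lt_le (hY : IsBESQ μ ℱ δ y Y) (hδ0 : 0 < δ) (hδ2 : δ ≤ 2) (hε : 0 < ε)
    (hK : 0 < K) (hyK : y ≤ K) (hT : 0 < T) :
    μ.real {ω | ∀ t ∈ Icc 0 T, ε < Y t ω}
      ≤ y ^ (1 - δ / 2) / K ^ (1 - δ / 2) + K / (δ * T) := by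
  rcases lt_or_ge y ε with hyε | hεy
  · have hempty : {ω | ∀ t ∈ Icc 0 T, ε < Y t ω} = ∅ := by
      refine eq_empty_of_forall_notMem fun ω hω => hyε.not_gt ?_
      simpa only [hY.init] using hω 0 ⟨le_rfl, hT.le⟩
    have := hY.start_nonneg
    rw [hempty, measureReal_empty]
    positivity
  · have hτ := hY.isConfinedTime_exitTime_zero ⟨hεy, hyK⟩ hT.le
    have htop := hY.rpow_mul_measureReal_eval_eq_le hδ0.le hδ2 hε hτ
    have htimeout := hY.measureReal_exitTime_zero_eq_le hδ0 ⟨hεy, hyK⟩ hT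
    rw [← le_div_iff₀' (by positivity)] at htop
    refine le_trans ?_ (add_le_add htop htimeout)
    refine (measureReal_mono fun ω hω => ?_).trans (measureReal_union_le _ _)
    rcases hY.exitTime_zero_eq_or ⟨hεy, hyK⟩ hT.le ω with h | h | h
    · exact Or.inr h
    · exact absurd h (hω _ ⟨hτ.nonneg ω, hτ.le ω⟩).ne'
    · exact Or.inl h

lemma measure_forall_ne_zero_le (hY : IsBESQ μ ℱ δ y Y) (hδ0 : 0 < δ) (hδ2 : δ ≤ 2)
    (hK : 0 < K) (hyK : y ≤ K) (hT : 0 < T) :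
    μ {ω | ∀ t, 0 ≤ t → Y t ω ≠ 0}
      ≤ ENNReal.ofReal (y ^ (1 - δ / 2) / K ^ (1 - δ / 2) + K / (δ * T)) := by
  set A : ℕ → Set Ω := fun n => {ω | ∀ t ∈ Icc 0 T, 1 / ((n : ℝ) + 1) < Y t ω}
  have hA : Monotone A := fun n k hnk ω hω t ht =>
    (Nat.one_div_le_one_div hnk).trans_lt (hω t ht)
  have hsub : {ω | ∀ t, 0 ≤ t → Y t ω ≠ 0} ⊆ ⋃ n, A n := fun ω hω => by
    obtain ⟨t, ht, hmin⟩ := isCompact_Icc.exists_isMinOn (nonempty_Icc.2 hT.le)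
      (hY.cont ω).continuousOn
    obtain ⟨n, hn⟩ := exists_nat_one_div_lt ((hY.nonneg t ω).lt_of_ne' (hω t ht.1))
    exact mem_iUnion.2 ⟨n, fun u hu => hn.trans_le (hmin hu)⟩
  refine (measure_mono hsub).trans ?_
  rw [hA.measure_iUnion]
  refine iSup_le fun n => ?_
  rw [← ofReal_measureReal]
  exact ENNReal.ofReal_le_ofReal
    (hY.measureReal_forall_lt_le hδ0 hδ2 Nat.one_div_pos_of_nat hK hyK hT)

theorem ae_exists_eq_zero (hY : IsBESQ μ ℱ δ y Y) (hδ0 : 0 < δ) (hδ2 : δ < 2) :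
    ∀ᵐ ω ∂μ, ∃ t, 0 ≤ t ∧ Y t ω = 0 := by
  have hset : {ω | ¬ ∃ t, 0 ≤ t ∧ Y t ω = 0} = {ω | ∀ t, 0 ≤ t → Y t ω ≠ 0} := by
    ext ω
    simp
  rw [ae_iff, hset, ← nonpos_iff_eq_zero]
  have hlimT (K : ℝ) : Tendsto (fun T => ENNReal.ofReal
      (y ^ (1 - δ / 2) / K ^ (1 - δ / 2) + K / (δ * T))) atTop
      (𝓝 (ENNReal.ofReal (y ^ (1 - δ / 2) / K ^ (1 - δ / 2)))) := by
    refine ENNReal.tendsto_ofReal ?_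
    simpa using ((tendsto_id.const_mul_atTop hδ0).const_div_atTop K).const_add
      (y ^ (1 - δ / 2) / K ^ (1 - δ / 2))
  have hlimK : Tendsto (fun K : ℝ => ENNReal.ofReal (y ^ (1 - δ / 2) / K ^ (1 - δ / 2))) atTop
      (𝓝 0) := by
    simpa using ENNReal.tendsto_ofReal
      ((tendsto_rpow_atTop (by linarith)).const_div_atTop (y ^ (1 - δ / 2)))
  refine ge_of_tendsto hlimK ?_
  filter_upwards [eventually_gt_atTop 0, eventually_ge_atTop y] with K hK hyK
  refine ge_of_tendsto (hlimT K) ?_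
  filter_upwards [eventually_gt_atTop 0] with T hT
  exact hY.measure_forall_ne_zero_le hδ0 hδ2.le hK hyK hT

end HittingZero

end IsBESQ

/-- The paths that reach height `K / 2` before hitting `0` and then stay above it for a time
`K / 96`, in which a path started at `K` drops to `K / 2` with probability at most `1 / 2`. -/
def highExcursion {Ω : Type*} (Y : ℝ → Ω → ℝ) (K : ℝ) : Set Ω :=
  {ω | ∃ s, 0 ≤ s ∧ (∀ t ∈ Icc 0 s, 0 < Y t ω) ∧ ∀ t ∈ Icc s (s + K / 96), K / 2 ≤ Y t ω}

namespace IsBESQ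

section Staying

variable {Ω : Type*} {m : MeasurableSpace Ω} {μ : Measure Ω} {ℱ : Filtration ℝ m} {δ y : ℝ}
  {Y : ℝ → Ω → ℝ} {τ : Ω → ℝ} {ε K T r : ℝ}

lemma indicator_sub_indicator_le_sq_sub (hY : IsBESQ μ ℱ δ y Y) (hK : 0 ≤ K) (hr : 0 ≤ r) (ω : Ω)
    (hτK : Y (τ ω) ω ≤ K) :
    K ^ 2 / 4 * ({ω | K / 2 ≤ Y (τ ω) ω ∧
          exitTime Y (Icc (K / 2) (2 * K)) τ r ω < τ ω + r}.indicator 1 ω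
        - {ω | Y (τ ω) ω ∈ Ico (K / 2) K}.indicator 1 ω)
      ≤ (Y (exitTime Y (Icc (K / 2) (2 * K)) τ r ω) ω - K) ^ 2 - (Y (τ ω) ω - K) ^ 2 := by
  simp only [indicator_apply, mem_ofPred_eq, Pi.one_apply, mem_Ico]
  by_cases hlow : K / 2 ≤ Y (τ ω) ω
  · have hexit : (if K / 2 ≤ Y (τ ω) ω ∧ exitTime Y (Icc (K / 2) (2 * K)) τ r ω < τ ω + r
        then 1 else 0) * (K ^ 2 / 4) ≤ (Y (exitTime Y (Icc (K / 2) (2 * K)) τ r ω) ω - K) ^ 2 := by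
      split_ifs with h
      · rcases eval_exitTime_Icc hr (hY.cont ω) ⟨hlow, by linarith⟩ h.2 with h' | h' <;>
          rw [h'] <;> nlinarith
      · simpa using sq_nonneg _
    have hstart : (Y (τ ω) ω - K) ^ 2
        ≤ (if K / 2 ≤ Y (τ ω) ω ∧ Y (τ ω) ω < K then 1 else 0) * (K ^ 2 / 4) := by
      split_ifs with h
      · nlinarith
      · rw [hτK.antisymm (not_lt.1 fun hlt => h ⟨hlow, hlt⟩)]
        simp
    linarith
  · rw [exitTime_eq_of_notMem hr fun h => hlow h.1]
    simp [hlow]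

lemma intervalIntegral_generator_sq_sub_le (hY : IsBESQ μ ℱ δ y Y) (hδ0 : 0 ≤ δ) (hδ2 : δ ≤ 2)
    (hK : 0 ≤ K) (hr : 0 ≤ r) (ω : Ω) (hτK : Y (τ ω) ω ≤ K) :
    ∫ u in τ ω..exitTime Y (Icc (K / 2) (2 * K)) τ r ω,
        besqGenerator δ (fun x => 2 * (x - K)) (fun _ => 2) (Y u ω)
      ≤ 12 * K * r * {ω | K / 2 ≤ Y (τ ω) ω}.indicator 1 ω := by
  by_cases hlow : K / 2 ≤ Y (τ ω) ω
  · have hmem : Y (τ ω) ω ∈ Icc (K / 2) (2 * K) := ⟨hlow, by linarith⟩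
    have hcont : Continuous fun u =>
        besqGenerator δ (fun x => 2 * (x - K)) (fun _ => 2) (Y u ω) :=
      (continuous_besqGenerator δ (by fun_prop) continuous_const).comp (hY.cont ω)
    have hle := le_exitTime Y (Icc (K / 2) (2 * K)) τ hr ω
    calc _ ≤ ∫ _ in τ ω..exitTime Y (Icc (K / 2) (2 * K)) τ r ω, 12 * K := by
          refine intervalIntegral.integral_mono_on hle (hcont.intervalIntegrable _ _)
            intervalIntegrable_const fun u hu => ?_
          have hu := mem_of_mem_Icc_exitTime (hY.cont ω) isClosed_Icc hmem hu
          simp only [besqGenerator]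
          nlinarith [hu.1, hu.2, mul_le_mul_of_nonneg_left hu.2 hδ0]
      _ ≤ 12 * K * r := by
          rw [intervalIntegral.integral_const, smul_eq_mul, mul_comm]
          gcongr
          linarith [exitTime_le Y (Icc (K / 2) (2 * K)) τ r ω]
      _ = _ := by simp [hlow]
  · rw [exitTime_eq_of_notMem hr fun h => hlow h.1]
    simp [hlow]

variable [IsProbabilityMeasure μ]

-- Dynkin's formula for `(x - K) ^ 2`, whose generator is at most `12 * K` on `[K / 2, 2 * K]`.
lemma measureReal_exitTime_lt_le (hY : IsBESQ μ ℱ δ y Y) (hδ0 : 0 ≤ δ) (hδ2 : δ ≤ 2) (hK : 0 < K)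
    (hr : 0 ≤ r) (hτ : IsConfinedTime ℱ Y 0 K T τ) :
    μ.real {ω | K / 2 ≤ Y (τ ω) ω ∧ exitTime Y (Icc (K / 2) (2 * K)) τ r ω < τ ω + r}
      ≤ μ.real {ω | Y (τ ω) ω ∈ Ico (K / 2) K} + 48 * r / K * μ.real {ω | K / 2 ≤ Y (τ ω) ω} := by
  have hτ' : IsConfinedTime ℱ Y 0 (2 * K) T τ := hτ.mono (Icc_subset_Icc_right (by linarith))
  have hρ := hY.isConfinedTime_exitTime hτ' (c := K / 2) (d := 2 * K) hr subset_rfl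
    (Icc_subset_Icc_left (half_pos hK).le)
  have hτm := hτ.isOptionalTime.measurable
  have hYτ := hY.measurable_eval hτm
  have hF : MeasurableSet {ω | K / 2 ≤ Y (τ ω) ω ∧
      exitTime Y (Icc (K / 2) (2 * K)) τ r ω < τ ω + r} :=
    (measurableSet_le measurable_const hYτ).inter
      (measurableSet_lt hρ.isOptionalTime.measurable (hτm.add_const r))
  have hM : MeasurableSet {ω | Y (τ ω) ω ∈ Ico (K / 2) K} := hYτ measurableSet_Ico
  have hS : MeasurableSet {ω | K / 2 ≤ Y (τ ω) ω} := measurableSet_le measurable_const hYτ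
  have int_indicator {A : Set Ω} (hA : MeasurableSet A) :
      Integrable (A.indicator (1 : Ω → ℝ)) μ := (integrable_const 1).indicator hA
  have hf := hasTaylorOn_sub_sq K (Icc 0 (2 * K))
  have hL := continuous_besqGenerator δ hf.continuous_fst hf.continuous_snd
  have hdynkin := hY.dynkin_sub hδ0 hτ' hρ hf
  have hlower := integral_mono (((int_indicator hF).sub (int_indicator hM)).const_mul (K ^ 2 / 4))
    ((hY.integrable_comp_eval hρ hf.continuous).sub (hY.integrable_comp_eval hτ' hf.continuous))
    fun ω => hY.indicator_sub_indicator_le_sq_sub hK.le hr ω (hτ.eval_mem_Icc ω).2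
  have hupper := integral_mono (hY.integrable_intervalIntegral_comp_of_confined hτ' hρ hL)
    ((int_indicator hS).const_mul (12 * K * r))
    fun ω => hY.intervalIntegral_generator_sq_sub_le hδ0 hδ2 hK.le hr ω (hτ.eval_mem_Icc ω).2
  have hmain := (hlower.trans_eq hdynkin).trans hupper
  rw [integral_const_mul, integral_const_mul, integral_sub' (int_indicator hF) (int_indicator hM),
    integral_indicator_one hF, integral_indicator_one hM, integral_indicator_one hS] at hmain
  rw [← sub_le_iff_le_add']
  refine le_of_mul_le_mul_left (hmain.trans_eq ?_) (show 0 < K ^ 2 / 4 by positivity)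
  field_simp
  ring

lemma measureReal_eval_eq_le_add (hY : IsBESQ μ ℱ δ y Y) (hδ0 : 0 ≤ δ) (hδ2 : δ ≤ 2) (hK : 0 < K)
    (hτ : IsConfinedTime ℱ Y 0 K T τ) :
    μ.real {ω | Y (τ ω) ω = K} / 2 ≤ μ.real {ω | Y (τ ω) ω ∈ Ico (K / 2) K} + μ.real {ω |
      K / 2 ≤ Y (τ ω) ω ∧ exitTime Y (Icc (K / 2) (2 * K)) τ (K / 96) ω = τ ω + K / 96} := by
  have hexit := hY.measureReal_exitTime_lt_le hδ0 hδ2 hK (r := K / 96) (by positivity) hτ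
  set M := {ω | Y (τ ω) ω ∈ Ico (K / 2) K}
  set S := {ω | K / 2 ≤ Y (τ ω) ω}
  set F := {ω | K / 2 ≤ Y (τ ω) ω ∧
    exitTime Y (Icc (K / 2) (2 * K)) τ (K / 96) ω < τ ω + K / 96}
  set E := {ω | K / 2 ≤ Y (τ ω) ω ∧
    exitTime Y (Icc (K / 2) (2 * K)) τ (K / 96) ω = τ ω + K / 96}
  have hS : μ.real S ≤ μ.real F + μ.real E :=
    (measureReal_mono fun ω hω => (exitTime_le Y (Icc (K / 2) (2 * K)) τ (K / 96) ω).lt_or_eq.imp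
      (And.intro hω) (And.intro hω)).trans (measureReal_union_le _ _)
  have htop : μ.real {ω | Y (τ ω) ω = K} ≤ μ.real S :=
    measureReal_mono fun ω (hω : Y (τ ω) ω = K) => show K / 2 ≤ _ by linarith
  rw [show 48 * (K / 96) / K = 1 / 2 by field_simp; norm_num] at hexit
  linarith

end Staying

section Excursion

variable {Ω : Type*} {m : MeasurableSpace Ω} {μ : Measure Ω} [IsProbabilityMeasure μ]
  {ℱ : Filtration ℝ m} {δ y : ℝ} {Y : ℝ → Ω → ℝ} {ε K T : ℝ}

lemma sub_div_le_measureReal_highExcursion (hY : IsBESQ μ ℱ δ y Y) (hδ0 : 0 < δ) (hδ2 : δ ≤ 2)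
    (hε : 0 < ε) (hεy : ε ≤ y) (hyK : y ≤ K) (hεK : ε < K / 2) (hT : 0 < T) :
    (y ^ (1 - δ / 2) - ε ^ (1 - δ / 2)) / K ^ (1 - δ / 2) / 2 - 3 / 2 * (K / (δ * T))
      ≤ μ.real (highExcursion Y K) := by
  have hK : 0 < K := by linarith
  have hτ := hY.isConfinedTime_exitTime_zero ⟨hεy, hyK⟩ hT.le
  have hscale := hY.rpow_le_rpow_add_rpow_mul_measureReal hδ0.le hδ2 hε hτ
  have htimeout := hY.measureReal_exitTime_zero_eq_le hδ0 ⟨hεy, hyK⟩ hT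
  have hstay := hY.measureReal_eval_eq_le_add hδ0.le hδ2 hK (hτ.mono (Icc_subset_Icc_left hε.le))
  have hcases := hY.exitTime_zero_eq_or ⟨hεy, hyK⟩ hT.le
  set τ := exitTime Y (Icc ε K) (fun _ => 0) T
  have hne : μ.real {ω | Y (τ ω) ω ≠ ε} ≤ μ.real {ω | τ ω = T} + μ.real {ω | Y (τ ω) ω = K} :=
    (measureReal_mono fun ω hω => (hcases ω).imp_right (Or.resolve_left · hω)).trans
      (measureReal_union_le _ _)
  have hmiddle : μ.real {ω | Y (τ ω) ω ∈ Ico (K / 2) K} ≤ μ.real {ω | τ ω = T} :=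
    measureReal_mono fun ω hω => (hcases ω).resolve_right
      (not_or.2 ⟨(hεK.trans_le hω.1).ne', hω.2.ne⟩)
  have hexcursion : μ.real {ω | K / 2 ≤ Y (τ ω) ω ∧
      exitTime Y (Icc (K / 2) (2 * K)) τ (K / 96) ω = τ ω + K / 96}
        ≤ μ.real (highExcursion Y K) := by
    refine measureReal_mono fun ω ⟨hω, hstays⟩ => ⟨τ ω, hτ.nonneg ω, fun t ht =>
      hε.trans_le (hτ.mem_Icc ω t ht).1, fun t ht => ?_⟩
    rw [← hstays] at ht
    exact (mem_of_mem_Icc_exitTime (hY.cont ω) isClosed_Icc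
      ⟨hω, by linarith [(hτ.eval_mem_Icc ω).2]⟩ ht).1
  have hreach : (y ^ (1 - δ / 2) - ε ^ (1 - δ / 2)) / K ^ (1 - δ / 2)
      ≤ μ.real {ω | Y (τ ω) ω ≠ ε} := by
    rw [div_le_iff₀' (by positivity)]
    linarith
  linarith

theorem div_rpow_le_measureReal_highExcursion (hY : IsBESQ μ ℱ δ y Y) (hδ0 : 0 < δ) (hδ2 : δ < 2)
    (hy : 0 < y) (hyK : y ≤ K) :
    (y / K) ^ (1 - δ / 2) / 2 ≤ μ.real (highExcursion Y K) := by
  have hK : 0 < K := hy.trans_le hyK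
  have hp : 0 < 1 - δ / 2 := by linarith
  have hlimT (ε : ℝ) : Tendsto (fun T => (y ^ (1 - δ / 2) - ε ^ (1 - δ / 2)) / K ^ (1 - δ / 2) / 2
      - 3 / 2 * (K / (δ * T))) atTop
      (𝓝 ((y ^ (1 - δ / 2) - ε ^ (1 - δ / 2)) / K ^ (1 - δ / 2) / 2)) := by
    simpa using (((tendsto_id.const_mul_atTop hδ0).const_div_atTop K).const_mul (3 / 2)).const_sub
      ((y ^ (1 - δ / 2) - ε ^ (1 - δ / 2)) / K ^ (1 - δ / 2) / 2)
  have hlimε : Tendsto (fun ε : ℝ => (y ^ (1 - δ / 2) - ε ^ (1 - δ / 2)) / K ^ (1 - δ / 2) / 2)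
      (𝓝[>] 0) (𝓝 ((y / K) ^ (1 - δ / 2) / 2)) := by
    have hpow := (Real.continuous_rpow_const hp.le).tendsto (0 : ℝ)
    rw [Real.zero_rpow hp.ne'] at hpow
    rw [Real.div_rpow hy.le hK.le]
    simpa using (((hpow.mono_left nhdsWithin_le_nhds).const_sub (y ^ (1 - δ / 2))).div_const
      (K ^ (1 - δ / 2))).div_const 2
  refine le_of_tendsto hlimε ?_
  have hsmall : ∀ᶠ ε : ℝ in 𝓝[>] 0, ε ∈ Ioo 0 (min y (K / 2)) :=
    Ioo_mem_nhdsGT (lt_min hy (half_pos hK))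
  filter_upwards [hsmall] with ε hε
  refine le_of_tendsto (hlimT ε) ?_
  filter_upwards [eventually_gt_atTop 0] with T hT
  exact hY.sub_div_le_measureReal_highExcursion hδ0 hδ2.le hε.1
    (hε.2.le.trans (min_le_left _ _)) hyK (hε.2.trans_le (min_le_right _ _)) hT

end Excursion

end IsBESQ

section PathIntegral

lemma rpow_mul_sub_le_integral_rpow {f : ℝ → ℝ} (hf : Continuous f) (hf0 : ∀ t, 0 ≤ f t)
    {a b L α : ℝ} (hα : 0 ≤ α) (ha : 0 ≤ a) (hab : a ≤ b) (hL : 0 < L)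
    (hpos : ∀ t ∈ Icc 0 a, 0 < f t) (hlow : ∀ t ∈ Icc a b, L ≤ f t)
    (hzero : ∃ t, 0 ≤ t ∧ f t = 0) :
    L ^ α * (b - a) ≤ ∫ s in (0 : ℝ)..sInf {t | 0 ≤ t ∧ f t = 0}, f s ^ α := by
  have hb : b ≤ sInf {t | 0 ≤ t ∧ f t = 0} := by
    refine le_csInf hzero fun t ⟨ht, hft⟩ => not_lt.1 fun htb => ?_
    rcases le_total t a with hta | hat
    · exact (hpos t ⟨ht, hta⟩).ne' hft
    · exact (hL.trans_le (hlow t ⟨hat, htb.le⟩)).ne' hft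
  have hcont : Continuous fun s => f s ^ α := hf.rpow_const fun _ => Or.inr hα
  calc L ^ α * (b - a) = ∫ _ in a..b, L ^ α := by
        rw [intervalIntegral.integral_const, smul_eq_mul, mul_comm]
    _ ≤ ∫ s in a..b, f s ^ α :=
        intervalIntegral.integral_mono_on hab intervalIntegrable_const
          (hcont.intervalIntegrable _ _) fun s hs => Real.rpow_le_rpow hL.le (hlow s hs) hα
    _ ≤ ∫ s in (0 : ℝ)..sInf {t | 0 ≤ t ∧ f t = 0}, f s ^ α :=
        intervalIntegral.integral_mono_interval ha hab hb
          (ae_of_all _ fun s => Real.rpow_nonneg (hf0 s) α) (hcont.intervalIntegrable _ _)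

lemma rpow_add_one_le_integral_of_mem_highExcursion {Ω : Type*} {m : MeasurableSpace Ω}
    {μ : Measure Ω} {ℱ : Filtration ℝ m} {δ y : ℝ} {Y : ℝ → Ω → ℝ} (hY : IsBESQ μ ℱ δ y Y)
    {α w : ℝ} (hα : 0 ≤ α) (hw : 0 < w) {ω : Ω} (hω : ω ∈ highExcursion Y (96 * w))
    (hzero : ∃ t, 0 ≤ t ∧ Y t ω = 0) :
    w ^ (α + 1) ≤ ∫ s in (0 : ℝ)..sInf {t | 0 ≤ t ∧ Y t ω = 0}, Y s ω ^ α := by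
  obtain ⟨s, hs, hpos, hlow⟩ := hω
  rw [mul_div_cancel_left₀ w (by norm_num)] at hlow
  calc w ^ (α + 1) = w ^ α * (s + w - s) := by rw [Real.rpow_add_one hw.ne', add_sub_cancel_left]
    _ ≤ _ := rpow_mul_sub_le_integral_rpow (hY.cont ω) (fun t => hY.nonneg t ω) hα hs
        (le_add_of_nonneg_right hw.le) hw hpos (fun t ht => (by linarith [hlow t ht])) hzero

end PathIntegral

/-- `∫_0^{τ_0} Y_s^α ds ≥ z`, with `τ_0 = inf{t ≥ 0 : Y_t = 0}` (the guard
`∃ t ≥ 0, Y t ω = 0` records that the hitting time is finite, which holds a.s.). -/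
theorem stmt_8 {Ω : Type*} {m : MeasurableSpace Ω} (μ : Measure Ω) [IsProbabilityMeasure μ]
    (ℱ : Filtration ℝ m) (δ : ℝ) (hδ0 : 0 < δ) (hδ2 : δ < 2)
    (Y : ℝ → Ω → ℝ) (hY : IsBESQ μ ℱ δ 1 Y)
    (α : ℝ) (hα : 0 ≤ α) :
    ∃ c : ℝ, 0 < c ∧ ∀ z : ℝ, 1 < z →
      ENNReal.ofReal (c * z ^ (-((2 - δ) / (2 + 2 * α)))) ≤
        μ {ω | (∃ t : ℝ, 0 ≤ t ∧ Y t ω = 0) ∧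
          z ≤ ∫ s in (0:ℝ)..(sInf {t : ℝ | 0 ≤ t ∧ Y t ω = 0}), (Y s ω) ^ α} := by
  set p : ℝ := 1 - δ / 2 with hp
  refine ⟨(1 / 96) ^ p / 2, by positivity, fun z hz => ?_⟩
  have hz0 : 0 < z := one_pos.trans hz
  set w : ℝ := z ^ (α + 1)⁻¹ with hw
  have hw1 : 1 < w := Real.one_lt_rpow hz (by positivity)
  have hw0 : 0 < w := one_pos.trans hw1
  have hwz : w ^ (α + 1) = z := Real.rpow_inv_rpow hz0.le (by positivity)
  have hexp : z ^ (-((2 - δ) / (2 + 2 * α))) = (1 / w) ^ p := by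
    rw [one_div, Real.inv_rpow hw0.le, hw, ← Real.rpow_mul hz0.le, Real.rpow_neg hz0.le, hp]
    congr 2
    field_simp
    ring
  calc ENNReal.ofReal ((1 / 96) ^ p / 2 * z ^ (-((2 - δ) / (2 + 2 * α))))
      = ENNReal.ofReal ((1 / (96 * w)) ^ p / 2) := by
        rw [hexp, div_mul_eq_mul_div, ← Real.mul_rpow (by norm_num) (by positivity),
          one_div_mul_one_div]
    _ ≤ ENNReal.ofReal (μ.real (highExcursion Y (96 * w))) := ENNReal.ofReal_le_ofReal
        (hY.div_rpow_le_measureReal_highExcursion hδ0 hδ2 one_pos (by linarith))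
    _ = μ (highExcursion Y (96 * w)) := ofReal_measureReal
    _ ≤ _ := by
        refine measure_mono_ae ?_
        filter_upwards [hY.ae_exists_eq_zero hδ0 hδ2] with ω hzero hω
        exact ⟨hzero, hwz ▸ rpow_add_one_le_integral_of_mem_highExcursion hY hα hw0 hω hzero⟩
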